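/- (Safiullin) For every context-free language L over an alphabet Σ with ε ∉ L, there exists a Lambek categorial grammar with unique type assignment generating L: there exist Lambek types A_a for each letter a ∈ Σ and a target type H (all without the ⁺ connective) such that a word a₁ a₂ … aₘ ∈ Σ⁺ belongs to L if and only if the sequent A_{a₁}, A_{a₂}, …, A_{aₘ} → H is derivable in the Lambek calculus L. Moreover, such a grammar can be effectively constructed from a context-free grammar for L. -/

import Mathlib

/-- Types of the Lambek calculus: primitive types, product `mul`,
left division `ldiv A B = A \ B`, right division `rdiv B A = B / A`. -/
inductive Tp : Type where
  | pr : ℕ → Tp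
  | mul : Tp → Tp → Tp
  | ldiv : Tp → Tp → Tp   -- `ldiv A B` is `A \ B`
  | rdiv : Tp → Tp → Tp   -- `rdiv B A` is `B / A`

/-- Derivability in the Lambek calculus L (with Lambek's non-emptiness
restriction). -/
inductive DerL : List Tp → Tp → Prop where
  | ax (A : Tp) : DerL [A] A
  | ldiv_r {P : List Tp} {A B : Tp} (hne : P ≠ []) :
      DerL (A :: P) B → DerL P (Tp.ldiv A B)
  | ldiv_l {P Γ Δ : List Tp} {A B C : Tp} :
      DerL P A → DerL (Γ ++ B :: Δ) C →
      DerL (Γ ++ P ++ Tp.ldiv A B :: Δ) C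
  | rdiv_r {P : List Tp} {A B : Tp} (hne : P ≠ []) :
      DerL (P ++ [A]) B → DerL P (Tp.rdiv B A)
  | rdiv_l {P Γ Δ : List Tp} {A B C : Tp} :
      DerL P A → DerL (Γ ++ B :: Δ) C →
      DerL (Γ ++ Tp.rdiv B A :: (P ++ Δ)) C
  | mul_r {Γ Δ : List Tp} {A B : Tp} :
      DerL Γ A → DerL Δ B → DerL (Γ ++ Δ) (Tp.mul A B)
  | mul_l {Γ Δ : List Tp} {A B C : Tp} :
      DerL (Γ ++ A :: B :: Δ) C → DerL (Γ ++ Tp.mul A B :: Δ) C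
/-- A context-free grammar over the terminal alphabet `T`, with nonterminals
numbered by naturals: a start nonterminal together with a finite list of
rules, each rewriting a nonterminal to a string of symbols (`Sum.inl` are
terminals, `Sum.inr` are nonterminals). -/
abbrev CFG (T : Type) : Type := ℕ × List (ℕ × List (T ⊕ ℕ))

/-- One rewriting step of the grammar `G`. -/
def CFGStep {T : Type} (G : CFG T) (x y : List (T ⊕ ℕ)) : Prop :=
  ∃ r ∈ G.2, ∃ p q : List (T ⊕ ℕ), x = p ++ Sum.inr r.1 :: q ∧ y = p ++ r.2 ++ q

/-- The language generated by the grammar `G`. -/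
def Lang {T : Type} (G : CFG T) : Set (List T) :=
  { w | Relation.ReflTransGen (CFGStep G) [Sum.inr G.1] (w.map Sum.inl) }

/-- `G` has no ε-rules. -/
def EpsFree {T : Type} (G : CFG T) : Prop := ∀ r ∈ G.2, r.2 ≠ []

/-- A fixed effective Gödel numbering of Lambek types. -/
def encodeTp : Tp → ℕ
  | Tp.pr n => Nat.pair 0 n
  | Tp.mul A B => Nat.pair 1 (Nat.pair (encodeTp A) (encodeTp B))
  | Tp.ldiv A B => Nat.pair 2 (Nat.pair (encodeTp A) (encodeTp B))
  | Tp.rdiv A B => Nat.pair 3 (Nat.pair (encodeTp A) (encodeTp B))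

/-! ### Cut admissibility, by closure semantics -/

namespace DerL

theorem antecedent_ne_nil {Γ : List Tp} {C : Tp} (h : DerL Γ C) : Γ ≠ [] := by
  induction h <;> simp_all

/-- The sequences replaceable for the members of `X` in every derivable context. -/
def closure (X : Set (List Tp)) : Set (List Tp) :=
  {Γ | Γ ≠ [] ∧ ∀ Δ₁ Δ₂ C, (∀ Γ' ∈ X, DerL (Δ₁ ++ Γ' ++ Δ₂) C) → DerL (Δ₁ ++ Γ ++ Δ₂) C}

/-- The interpretation of a type as a set of sequences of types. -/
def interp : Tp → Set (List Tp)
  | Tp.pr n => {Γ | DerL Γ (Tp.pr n)}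
  | Tp.mul A B => closure {Γ | ∃ Γ₁ ∈ interp A, ∃ Γ₂ ∈ interp B, Γ = Γ₁ ++ Γ₂}
  | Tp.ldiv A B => {Γ | Γ ≠ [] ∧ ∀ Δ ∈ interp A, Δ ++ Γ ∈ interp B}
  | Tp.rdiv B A => {Γ | Γ ≠ [] ∧ ∀ Δ ∈ interp A, Γ ++ Δ ∈ interp B}

theorem closure_interp_subset (A : Tp) : closure (interp A) ⊆ interp A := by
  induction A with
  | pr n =>
    rintro Γ ⟨-, h⟩
    simpa [interp] using h [] [] (Tp.pr n) (by simp [interp])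
  | mul A B ihA ihB =>
    rintro Γ ⟨hne, h⟩
    exact ⟨hne, fun Δ₁ Δ₂ C hC => h Δ₁ Δ₂ C fun Γ' hΓ' => hΓ'.2 Δ₁ Δ₂ C hC⟩
  | ldiv A B ihA ihB =>
    rintro Γ ⟨hne, h⟩
    refine ⟨hne, fun Δ hΔ => ihB ⟨by simp [hne], fun Δ₁ Δ₂ C hC => ?_⟩⟩
    have := h (Δ₁ ++ Δ) Δ₂ C (fun Γ' hΓ' => by simpa using hC _ (hΓ'.2 Δ hΔ))
    simpa using this
  | rdiv B A ihB ihA =>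
    rintro Γ ⟨hne, h⟩
    refine ⟨hne, fun Δ hΔ => ihB ⟨by simp [hne], fun Δ₁ Δ₂ C hC => ?_⟩⟩
    have := h Δ₁ (Δ ++ Δ₂) C (fun Γ' hΓ' => by simpa using hC _ (hΓ'.2 Δ hΔ))
    simpa using this

theorem subset_closure {X : Set (List Tp)} {Γ : List Tp} (hne : Γ ≠ []) (h : Γ ∈ X) :
    Γ ∈ closure X := ⟨hne, fun _ _ _ hC => hC _ h⟩

theorem singleton_mem_interp_and_of_mem_interp (A : Tp) :
    [A] ∈ interp A ∧ ∀ Γ ∈ interp A, DerL Γ A := by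
  induction A with
  | pr n => exact ⟨DerL.ax _, fun Γ h => h⟩
  | mul A B ihA ihB =>
    refine ⟨⟨by simp, fun Δ₁ Δ₂ C hC => ?_⟩, fun Γ h => ?_⟩
    · have := hC ([A] ++ [B]) ⟨_, ihA.1, _, ihB.1, rfl⟩
      simpa using DerL.mul_l (Γ := Δ₁) (Δ := Δ₂) (by simpa using this)
    · have := h.2 [] [] (Tp.mul A B) (by
        rintro _ ⟨Γ₁, h₁, Γ₂, h₂, rfl⟩
        simpa using DerL.mul_r (ihA.2 _ h₁) (ihB.2 _ h₂))
      simpa using this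
  | ldiv A B ihA ihB =>
    refine ⟨⟨by simp, fun Δ hΔ => closure_interp_subset B ⟨by simp, fun Δ₁ Δ₂ C hC => ?_⟩⟩,
      fun Γ h => ?_⟩
    · have := DerL.ldiv_l (Γ := Δ₁) (Δ := Δ₂) (ihA.2 _ hΔ) (by simpa using hC _ ihB.1)
      simpa using this
    · exact DerL.ldiv_r h.1 (ihB.2 _ (h.2 _ ihA.1))
  | rdiv B A ihB ihA =>
    refine ⟨⟨by simp, fun Δ hΔ => closure_interp_subset B ⟨by simp, fun Δ₁ Δ₂ C hC => ?_⟩⟩,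
      fun Γ h => ?_⟩
    · have := DerL.rdiv_l (Γ := Δ₁) (Δ := Δ₂) (ihA.2 _ hΔ) (by simpa using hC _ ihB.1)
      simpa using this
    · exact DerL.rdiv_r h.1 (ihB.2 _ (h.2 _ ihA.1))

theorem ne_nil_of_mem_interp {A : Tp} {Γ : List Tp} (h : Γ ∈ interp A) : Γ ≠ [] :=
  ((singleton_mem_interp_and_of_mem_interp A).2 Γ h).antecedent_ne_nil

/-- Concatenations of members of the interpretations of the listed types. -/
def interpList : List Tp → Set (List Tp)
  | [] => {[]}
  | A :: Γ => {Θ | ∃ Θ₁ ∈ interp A, ∃ Θ₂ ∈ interpList Γ, Θ = Θ₁ ++ Θ₂}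

theorem mem_interpList_append {Γ Δ Θ : List Tp} :
    Θ ∈ interpList (Γ ++ Δ) ↔ ∃ Θ₁ ∈ interpList Γ, ∃ Θ₂ ∈ interpList Δ, Θ = Θ₁ ++ Θ₂ := by
  induction Γ generalizing Θ with
  | nil => simp [interpList]
  | cons A Γ ih =>
    constructor
    · rintro ⟨Θ₁, h₁, Θ₂, h₂, rfl⟩
      obtain ⟨Θ₃, h₃, Θ₄, h₄, rfl⟩ := ih.1 h₂
      exact ⟨_, ⟨_, h₁, _, h₃, rfl⟩, _, h₄, by simp⟩
    · rintro ⟨_, ⟨Θ₁, h₁, Θ₃, h₃, rfl⟩, Θ₄, h₄, rfl⟩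
      exact ⟨_, h₁, _, ih.2 ⟨_, h₃, _, h₄, rfl⟩, by simp⟩

theorem interpList_ne_nil {Γ Θ : List Tp} (hne : Γ ≠ []) (h : Θ ∈ interpList Γ) : Θ ≠ [] := by
  cases Γ with
  | nil => exact absurd rfl hne
  | cons A Γ =>
    obtain ⟨Θ₁, h₁, Θ₂, h₂, rfl⟩ := h
    simp [ne_nil_of_mem_interp h₁]

theorem interpList_subset {Γ : List Tp} {C : Tp} (h : DerL Γ C) : interpList Γ ⊆ interp C := by
  induction h with
  | ax A => rintro Θ ⟨Θ₁, h₁, Θ₂, rfl, rfl⟩; simpa using h₁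
  | ldiv_r hne _ ih => exact fun Θ hΘ =>
      ⟨interpList_ne_nil hne hΘ, fun Δ hΔ => ih ⟨_, hΔ, _, hΘ, rfl⟩⟩
  | ldiv_l _ _ ihA ihB =>
    intro Θ hΘ
    obtain ⟨_, hl, _, ⟨Θ₃, h₃, Θ₄, h₄, rfl⟩, rfl⟩ := mem_interpList_append.1 hΘ
    obtain ⟨Θ₁, h₁, Θ₂, h₂, rfl⟩ := mem_interpList_append.1 hl
    exact ihB (mem_interpList_append.2
      ⟨_, h₁, _, ⟨_, h₃.2 _ (ihA h₂), _, h₄, rfl⟩, by simp⟩)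
  | rdiv_r hne _ ih => exact fun Θ hΘ =>
      ⟨interpList_ne_nil hne hΘ, fun Δ hΔ => ih (mem_interpList_append.2
        ⟨_, hΘ, _, ⟨_, hΔ, _, rfl, rfl⟩, by simp⟩)⟩
  | rdiv_l _ _ ihA ihB =>
    intro Θ hΘ
    obtain ⟨Θ₁, h₁, _, ⟨Θ₂, h₂, _, hr, rfl⟩, rfl⟩ := mem_interpList_append.1 hΘ
    obtain ⟨Θ₃, h₃, Θ₄, h₄, rfl⟩ := mem_interpList_append.1 hr
    exact ihB (mem_interpList_append.2
      ⟨_, h₁, _, ⟨_, h₂.2 _ (ihA h₃), _, h₄, rfl⟩, by simp⟩)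
  | mul_r _ _ ihA ihB =>
    intro Θ hΘ
    obtain ⟨Θ₁, h₁, Θ₂, h₂, rfl⟩ := mem_interpList_append.1 hΘ
    exact subset_closure (by simp [ne_nil_of_mem_interp (ihA h₁)])
      ⟨_, ihA h₁, _, ihB h₂, rfl⟩
  | @mul_l Γ Δ A B C _ ih =>
    intro Θ hΘ
    obtain ⟨Θ₁, h₁, _, ⟨Θ₂, h₂, Θ₃, h₃, rfl⟩, rfl⟩ := mem_interpList_append.1 hΘ
    refine closure_interp_subset C ⟨by simp [h₂.1], fun Δ₁ Δ₂ E hE => ?_⟩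
    have := h₂.2 (Δ₁ ++ Θ₁) (Θ₃ ++ Δ₂) E (by
      rintro _ ⟨Φ₁, k₁, Φ₂, k₂, rfl⟩
      simpa using hE _ (ih (mem_interpList_append.2
        ⟨_, h₁, _, ⟨_, k₁, _, ⟨_, k₂, _, h₃, rfl⟩, rfl⟩, rfl⟩)))
    simpa using this

theorem singletons_mem_interpList (Γ : List Tp) : Γ ∈ interpList Γ := by
  induction Γ with
  | nil => rfl
  | cons A Γ ih => exact ⟨_, (singleton_mem_interp_and_of_mem_interp A).1, _, ih, rfl⟩

/-- The cut rule is admissible. -/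
theorem cut {P Γ Δ : List Tp} {A C : Tp} (h₁ : DerL P A) (h₂ : DerL (Γ ++ A :: Δ) C) :
    DerL (Γ ++ P ++ Δ) C := by
  refine (singleton_mem_interp_and_of_mem_interp C).2 _ (interpList_subset h₂
    (mem_interpList_append.2 ⟨Γ, singletons_mem_interpList Γ, P ++ Δ,
      ⟨P, interpList_subset h₁ (singletons_mem_interpList P), Δ,
        singletons_mem_interpList Δ, rfl⟩, by simp⟩))

end DerL

/-! ### Types preordered by derivability -/

namespace Tp

instance : Preorder Tp where
  le A B := DerL [A] B
  le_refl A := DerL.ax A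
  le_trans A B C h₁ h₂ := by simpa using DerL.cut (Γ := []) (Δ := []) h₁ h₂

theorem mul_le_mul {A A' B B' : Tp} (h₁ : A ≤ A') (h₂ : B ≤ B') : mul A B ≤ mul A' B' :=
  DerL.mul_l (Γ := []) (Δ := []) (DerL.mul_r (Γ := [A]) (Δ := [B]) h₁ h₂)

theorem derL_pair_iff {A B C : Tp} : DerL [A, B] C ↔ mul A B ≤ C := by
  refine ⟨fun h => DerL.mul_l (Γ := []) (Δ := []) h, fun h => ?_⟩
  simpa using DerL.cut (Γ := []) (Δ := []) (DerL.mul_r (DerL.ax A) (DerL.ax B)) h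

theorem mul_assoc_le (A B C : Tp) : mul (mul A B) C ≤ mul A (mul B C) :=
  DerL.mul_l (Γ := []) (Δ := []) (DerL.mul_l (Γ := []) (Δ := [C])
    (DerL.mul_r (Γ := [A]) (DerL.ax A) (DerL.mul_r (Γ := [B]) (DerL.ax B) (DerL.ax C))))

theorem le_mul_assoc (A B C : Tp) : mul A (mul B C) ≤ mul (mul A B) C :=
  DerL.mul_l (Γ := []) (Δ := []) (DerL.mul_l (Γ := [A]) (Δ := [])
    (DerL.mul_r (Γ := [A, B]) (DerL.mul_r (Γ := [A]) (DerL.ax A) (DerL.ax B)) (DerL.ax C)))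

theorem rdiv_mul_le (A B : Tp) : mul (rdiv B A) A ≤ B :=
  DerL.mul_l (Γ := []) (Δ := []) (DerL.rdiv_l (Γ := []) (Δ := []) (DerL.ax A) (DerL.ax B))

theorem mul_ldiv_le (A B : Tp) : mul A (ldiv A B) ≤ B :=
  DerL.mul_l (Γ := []) (Δ := []) (DerL.ldiv_l (Γ := []) (Δ := []) (DerL.ax A) (DerL.ax B))

theorem le_rdiv_iff {A B C : Tp} : A ≤ rdiv C B ↔ mul A B ≤ C :=
  ⟨fun h => (mul_le_mul h le_rfl).trans (rdiv_mul_le B C),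
    fun h => DerL.rdiv_r (by simp) (derL_pair_iff.2 h)⟩

theorem le_ldiv_iff {A B C : Tp} : B ≤ ldiv A C ↔ mul A B ≤ C :=
  ⟨fun h => (mul_le_mul le_rfl h).trans (mul_ldiv_le A C),
    fun h => DerL.ldiv_r (by simp) (derL_pair_iff.2 h)⟩

theorem rdiv_le_rdiv {A A' B B' : Tp} (hB : B ≤ B') (hA : A' ≤ A) : rdiv B A ≤ rdiv B' A' :=
  le_rdiv_iff.2 ((mul_le_mul le_rfl hA).trans ((rdiv_mul_le A B).trans hB))

theorem ldiv_le_ldiv {A A' B B' : Tp} (hB : B ≤ B') (hA : A' ≤ A) : ldiv A B ≤ ldiv A' B' :=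
  le_ldiv_iff.2 ((mul_le_mul hA le_rfl).trans ((mul_ldiv_le A B).trans hB))

end Tp

/-! ### The types of the construction -/

namespace StackTypes

open Tp

/-- Pops of the bit `false`. -/
def popK : Tp := rdiv (pr 2) (pr 2)

/-- Pops of the bit `true`. -/
def popL : Tp := rdiv (pr 3) (pr 3)

/-- The code of the stack symbol `g ≤ m`, put in front of `X`. -/
def block (m g : ℕ) (X : Tp) : Tp := (mul popK)^[g + 1] ((mul popL)^[m - g + 1] X)

/-- The code of a stack, listed from the top, put in front of `X`. -/
def stackTp (m : ℕ) (γ : List ℕ) (X : Tp) : Tp := γ.foldl (fun X g => block m g X) X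

/-- The bottom marker, which lies below `x₀` behind up to `n` blocks. -/
def bottom : ℕ → Tp
  | 0 => mul (mul (pr 1) (ldiv (pr 1) (pr 3))) (ldiv (pr 3) (pr 2))
  | n + 1 => mul (mul (bottom n) (ldiv (pr 2) (pr 3))) (ldiv (pr 3) (pr 2))

/-- The type `z / (X · ω)` of the inputs accepted from the stack `X`. -/
def accept (X : Tp) : Tp := rdiv (pr 0) (mul X (pr 5))

/-- The type of the transition replacing the symbol `r.1` on the top of the stack by `r.2`. -/
def ruleTp (m N : ℕ) (r : ℕ × List ℕ) : Tp :=
  mul (accept (stackTp m r.2 (bottom N))) (block m r.1 (bottom N))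

/-- A common lower bound of all transition types. -/
def lowerTp (m N : ℕ) : Tp :=
  mul (accept (pr 2)) ((mul popK)^[m + 1] ((mul popL)^[m + 1] (bottom N)))

/-- A common upper bound of `P` and `Q`, which have the common lower bound `D`. -/
def join (D P Q : Tp) : Tp :=
  rdiv (pr 4) (mul (rdiv (ldiv P (pr 4)) (ldiv D (pr 4)))
    (mul (ldiv D (pr 4)) (ldiv (ldiv D (pr 4)) (ldiv Q (pr 4)))))

/-- The join of the types of the listed transitions. -/
def joinTp (m N : ℕ) (l : List (ℕ × List ℕ)) : Tp :=
  l.foldr (fun r U => join (lowerTp m N) U (ruleTp m N r)) (lowerTp m N)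

/-- The type of a letter whose transitions are listed in `l`. -/
def letterTp (m N : ℕ) (l : List (ℕ × List ℕ)) : Tp := accept (joinTp m N l)

/-- The target type for the initial stack `[g]`. -/
def targetTp (m N g : ℕ) : Tp :=
  rdiv (pr 0) (mul (accept (bottom N)) (mul (stackTp m [g] (bottom N)) (pr 5)))

/-- Acceptance by empty stack: each letter `a` performs one transition from `R a`. -/
inductive Accepts {α : Type} (R : α → List (ℕ × List ℕ)) : List α → List ℕ → Prop
  | nil : Accepts R [] []
  | step {a : α} {w : List α} {g : ℕ} {β γ : List ℕ} :
      (g, β) ∈ R a → Accepts R w (β ++ γ) → Accepts R (a :: w) (g :: γ)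

/-! ### Accepted words give derivable sequents -/

theorem iterate_mul_mono (A : Tp) (n : ℕ) {X Y : Tp} (h : X ≤ Y) :
    (mul A)^[n] X ≤ (mul A)^[n] Y := by
  induction n generalizing X Y with
  | zero => exact h
  | succ n ih => exact ih (mul_le_mul le_rfl h)

theorem iterate_mul_mul_le (A : Tp) (n : ℕ) (X Z : Tp) :
    (mul A)^[n] (mul X Z) ≤ mul ((mul A)^[n] X) Z := by
  induction n generalizing X with
  | zero => exact le_rfl
  | succ n ih => exact (iterate_mul_mono A n (le_mul_assoc _ _ _)).trans (ih (mul A X))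

theorem iterate_rdiv_self_le (A : Tp) (n : ℕ) : (mul (rdiv A A))^[n] A ≤ A := by
  induction n with
  | zero => exact le_rfl
  | succ n ih => exact (iterate_mul_mono _ n (rdiv_mul_le A A)).trans ih

theorem iterate_rdiv_self_anti (A X : Tp) {i j : ℕ} (hi : 1 ≤ i) (hij : i ≤ j) :
    (mul (rdiv A A))^[j] X ≤ (mul (rdiv A A))^[i] X := by
  induction j, hij using Nat.le_induction with
  | base => exact le_rfl
  | succ j hij ih =>
    refine le_trans ?_ ih
    obtain ⟨k, rfl⟩ : ∃ k, j = k + 1 := ⟨j - 1, by omega⟩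
    refine iterate_mul_mono _ k ((le_mul_assoc _ _ _).trans (mul_le_mul ?_ le_rfl))
    exact le_rdiv_iff.2 ((mul_assoc_le _ _ _).trans
      ((mul_le_mul le_rfl (rdiv_mul_le A A)).trans (rdiv_mul_le A A)))

theorem block_mono (m g : ℕ) {X Y : Tp} (h : X ≤ Y) : block m g X ≤ block m g Y :=
  iterate_mul_mono _ _ (iterate_mul_mono _ _ h)

theorem block_mul_le (m g : ℕ) (X Z : Tp) : block m g (mul X Z) ≤ mul (block m g X) Z :=
  (iterate_mul_mono _ _ (iterate_mul_mul_le _ _ X Z)).trans (iterate_mul_mul_le _ _ _ _)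

theorem stackTp_mono (m : ℕ) (γ : List ℕ) {X Y : Tp} (h : X ≤ Y) :
    stackTp m γ X ≤ stackTp m γ Y := by
  induction γ generalizing X Y with
  | nil => exact h
  | cons g γ ih => exact ih (block_mono m g h)

theorem stackTp_mul_le (m : ℕ) (γ : List ℕ) (X Z : Tp) :
    stackTp m γ (mul X Z) ≤ mul (stackTp m γ X) Z := by
  induction γ generalizing X with
  | nil => exact le_rfl
  | cons g γ ih => exact (stackTp_mono m γ (block_mul_le m g X Z)).trans (ih _)

theorem stackTp_append (m : ℕ) (β γ : List ℕ) (X : Tp) :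
    stackTp m (β ++ γ) X = stackTp m γ (stackTp m β X) := List.foldl_append

theorem block_pr_mul_le (m g : ℕ) : block m g (mul (pr 3) (ldiv (pr 3) (pr 2))) ≤ pr 2 :=
  (iterate_mul_mono _ _ ((iterate_mul_mul_le _ _ _ _).trans
    ((mul_le_mul (iterate_rdiv_self_le _ _) le_rfl).trans (mul_ldiv_le _ _)))).trans
    (iterate_rdiv_self_le _ _)

theorem bottom_le (n : ℕ) : bottom n ≤ pr 2 := by
  induction n with
  | zero => exact (mul_le_mul (mul_ldiv_le _ _) le_rfl).trans (mul_ldiv_le _ _)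
  | succ n ih =>
    exact (mul_le_mul ((mul_le_mul ih le_rfl).trans (mul_ldiv_le _ _)) le_rfl).trans
      (mul_ldiv_le _ _)

theorem stackTp_bottom_le (m : ℕ) {β : List ℕ} {n : ℕ} (h : β.length ≤ n) :
    stackTp m β (bottom n) ≤ pr 2 := by
  induction β using List.reverseRecOn generalizing n with
  | nil => exact bottom_le n
  | append_singleton β g ih =>
    obtain ⟨n, rfl⟩ : ∃ k, n = k + 1 := ⟨n - 1, by simp at h; omega⟩
    rw [stackTp_append]
    refine (block_mono m g ?_).trans (block_pr_mul_le m g)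
    refine (stackTp_mul_le m β _ _).trans (mul_le_mul ?_ le_rfl)
    exact ((stackTp_mul_le m β _ _).trans (mul_le_mul (ih (by simpa using h)) le_rfl)).trans
      (mul_ldiv_le _ _)

theorem accept_anti {X Y : Tp} (h : X ≤ Y) : accept Y ≤ accept X :=
  rdiv_le_rdiv le_rfl (mul_le_mul h le_rfl)

theorem accept_mul_mul_le (A X Y : Tp) : mul (accept (mul A X)) (mul A Y) ≤ mul (accept X) Y :=
  (le_mul_assoc _ _ _).trans (mul_le_mul (le_rdiv_iff.2 ((mul_assoc_le _ _ _).trans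
    ((mul_le_mul le_rfl (le_mul_assoc _ _ _)).trans (rdiv_mul_le _ _)))) le_rfl)

theorem accept_iterate_mul_le (A : Tp) (n : ℕ) (X Y : Tp) :
    mul (accept ((mul A)^[n] X)) ((mul A)^[n] Y) ≤ mul (accept X) Y := by
  induction n generalizing X Y with
  | zero => exact le_rfl
  | succ n ih => exact (ih (mul A X) (mul A Y)).trans (accept_mul_mul_le A X Y)

theorem accept_stackTp_mul_le (m : ℕ) (γ : List ℕ) (X Y : Tp) :
    mul (accept (stackTp m γ X)) (stackTp m γ Y) ≤ mul (accept X) Y := by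
  induction γ generalizing X Y with
  | nil => exact le_rfl
  | cons g γ ih =>
    exact (ih (block m g X) (block m g Y)).trans
      ((accept_iterate_mul_le _ _ _ _).trans (accept_iterate_mul_le _ _ _ _))

theorem le_join {D P Q : Tp} (hP : D ≤ P) (hQ : D ≤ Q) : P ≤ join D P Q ∧ Q ≤ join D P Q := by
  have h₁ : ldiv P (pr 4) ≤ ldiv D (pr 4) := ldiv_le_ldiv le_rfl hP
  have h₂ : ldiv Q (pr 4) ≤ ldiv D (pr 4) := ldiv_le_ldiv le_rfl hQ
  constructor
  · refine le_rdiv_iff.2 (le_ldiv_iff.1 ?_)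
    exact (mul_le_mul le_rfl ((mul_ldiv_le _ _).trans h₂)).trans (rdiv_mul_le _ _)
  · refine le_rdiv_iff.2 (le_ldiv_iff.1 ?_)
    exact (le_mul_assoc _ _ _).trans
      ((mul_le_mul ((rdiv_mul_le _ _).trans h₁) le_rfl).trans (mul_ldiv_le _ _))

theorem lowerTp_le_ruleTp {m N : ℕ} {r : ℕ × List ℕ} (hg : r.1 ≤ m) (hN : r.2.length ≤ N) :
    lowerTp m N ≤ ruleTp m N r :=
  mul_le_mul (accept_anti (stackTp_bottom_le m hN))
    ((iterate_rdiv_self_anti _ _ (by omega) (by omega)).trans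
      (iterate_mul_mono _ _ (iterate_rdiv_self_anti _ _ (by omega) (by omega))))

theorem le_joinTp {m N : ℕ} {l : List (ℕ × List ℕ)}
    (hl : ∀ r ∈ l, r.1 ≤ m ∧ r.2.length ≤ N) :
    lowerTp m N ≤ joinTp m N l ∧ ∀ r ∈ l, ruleTp m N r ≤ joinTp m N l := by
  induction l with
  | nil => exact ⟨le_rfl, by simp⟩
  | cons r l ih =>
    obtain ⟨hlow, hle⟩ := ih fun s hs => hl s (List.mem_cons_of_mem _ hs)
    have hr := hl r List.mem_cons_self
    have := le_join hlow (lowerTp_le_ruleTp hr.1 hr.2)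
    refine ⟨hlow.trans this.1, fun s hs => ?_⟩
    rcases List.mem_cons.1 hs with rfl | hs
    · exact this.2
    · exact (hle s hs).trans this.1

theorem derL_accept_of_accepts {α : Type} {R : α → List (ℕ × List ℕ)} {m N : ℕ}
    (hR : ∀ a, ∀ r ∈ R a, r.1 ≤ m ∧ r.2.length ≤ N) {w : List α} {γ : List ℕ}
    (h : Accepts R w γ) :
    DerL (w.map (fun a => letterTp m N (R a)) ++ [accept (bottom N)])
      (accept (stackTp m γ (bottom N))) := by
  induction h with
  | nil => exact DerL.ax _
  | @step a w g β γ hr _ ih =>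
    rw [stackTp_append] at ih
    have hU : mul (accept (stackTp m γ (stackTp m β (bottom N))))
        (stackTp m (g :: γ) (bottom N)) ≤ joinTp m N (R a) :=
      (accept_stackTp_mul_le m γ _ _).trans ((le_joinTp (hR a)).2 _ hr)
    have h₁ := DerL.cut (Γ := []) (Δ := []) (DerL.mul_r ih (DerL.ax _)) hU
    have h₂ := DerL.mul_r h₁ (DerL.ax (pr 5))
    have h₃ := DerL.rdiv_l (Γ := []) (Δ := []) h₂ (DerL.ax (pr 0))
    refine DerL.rdiv_r (by simp) ?_
    have h₄ := DerL.mul_l (Γ := (a :: w).map (fun a => letterTp m N (R a)) ++ [accept (bottom N)])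
      (A := stackTp m (g :: γ) (bottom N)) (B := pr 5) (Δ := []) (C := pr 0)
      (by simpa [letterTp, accept] using h₃)
    exact h₄

theorem derL_targetTp_of_accepts {α : Type} {R : α → List (ℕ × List ℕ)} {m N g : ℕ}
    (hR : ∀ a, ∀ r ∈ R a, r.1 ≤ m ∧ r.2.length ≤ N) {w : List α} (hw : w ≠ [])
    (h : Accepts R w [g]) : DerL (w.map fun a => letterTp m N (R a)) (targetTp m N g) := by
  have h₁ := DerL.cut (Γ := []) (Δ := [_]) (derL_accept_of_accepts hR h)
    (derL_pair_iff.2 (rdiv_mul_le _ _))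
  refine DerL.rdiv_r (by simpa using hw) ?_
  refine DerL.mul_l (Δ := []) ?_
  simpa using h₁

end StackTypes

/-! ### Relational semantics -/

namespace Tp

section Relational

variable {V : Type} (W : V → V → Prop) (v : ℕ → V → V → Prop)

/-- The interpretation of a type as a binary relation contained in `W`. -/
def den : Tp → V → V → Prop
  | pr n, p, q => v n p q
  | mul A B, p, q => ∃ o, den A p o ∧ den B o q
  | ldiv A B, p, q => W p q ∧ ∀ o, den A o p → den B o q
  | rdiv B A, p, q => W p q ∧ ∀ o, den A q o → den B p o

/-- The composition of the interpretations of the listed types. -/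
def denList : List Tp → V → V → Prop
  | [], p, q => p = q
  | A :: Γ, p, q => ∃ o, den W v A p o ∧ denList Γ o q

variable {W v}

theorem denList_append {Γ Δ : List Tp} {p q : V} :
    denList W v (Γ ++ Δ) p q ↔ ∃ o, denList W v Γ p o ∧ denList W v Δ o q := by
  induction Γ generalizing p with
  | nil => simp [denList]
  | cons A Γ ih => simp only [List.cons_append, denList, ih]; grind

theorem den_subset (hW : ∀ p q r, W p q → W q r → W p r) (hv : ∀ n p q, v n p q → W p q)
    {A : Tp} {p q : V} (h : den W v A p q) : W p q := by
  induction A generalizing p q with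
  | pr n => exact hv n p q h
  | mul A B ihA ihB => obtain ⟨o, h₁, h₂⟩ := h; exact hW _ _ _ (ihA h₁) (ihB h₂)
  | ldiv A B _ _ => exact h.1
  | rdiv B A _ _ => exact h.1

theorem denList_subset (hW : ∀ p q r, W p q → W q r → W p r) (hv : ∀ n p q, v n p q → W p q)
    {Γ : List Tp} (hne : Γ ≠ []) {p q : V} (h : denList W v Γ p q) : W p q := by
  induction Γ generalizing p with
  | nil => exact absurd rfl hne
  | cons A Γ ih =>
    obtain ⟨o, h₁, h₂⟩ := h
    cases Γ with
    | nil => cases h₂; exact den_subset hW hv h₁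
    | cons B Γ => exact hW _ _ _ (den_subset hW hv h₁) (ih (by simp) h₂)

theorem den_of_derL (hW : ∀ p q r, W p q → W q r → W p r) (hv : ∀ n p q, v n p q → W p q)
    {Γ : List Tp} {C : Tp} (h : DerL Γ C) {p q : V} (hpq : denList W v Γ p q) :
    den W v C p q := by
  induction h generalizing p q with
  | ax A => obtain ⟨o, h, rfl⟩ := hpq; exact h
  | ldiv_r hne _ ih => exact ⟨denList_subset hW hv hne hpq, fun o ho => ih ⟨p, ho, hpq⟩⟩
  | ldiv_l _ _ ihA ihB =>
    obtain ⟨o, ho, o', h₁, h₂⟩ := denList_append.1 hpq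
    obtain ⟨o₁, h₃, h₄⟩ := denList_append.1 ho
    exact ihB (denList_append.2 ⟨o₁, h₃, o', h₁.2 _ (ihA h₄), h₂⟩)
  | rdiv_r hne _ ih =>
    exact ⟨denList_subset hW hv hne hpq, fun o ho =>
      ih (denList_append.2 ⟨q, hpq, o, ho, rfl⟩)⟩
  | rdiv_l _ _ ihA ihB =>
    obtain ⟨o, ho, o', h₁, h₂⟩ := denList_append.1 hpq
    obtain ⟨o₁, h₃, h₄⟩ := denList_append.1 h₂
    exact ihB (denList_append.2 ⟨o, ho, o₁, h₁.2 _ (ihA h₃), h₄⟩)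
  | mul_r _ _ ihA ihB =>
    obtain ⟨o, h₁, h₂⟩ := denList_append.1 hpq
    exact ⟨o, ihA h₁, ihB h₂⟩
  | mul_l _ ih =>
    obtain ⟨o, h₁, o', ⟨o₁, h₂, h₃⟩, h₄⟩ := denList_append.1 hpq
    exact ih (denList_append.2 ⟨o, h₁, o₁, h₂, o', h₃, h₄⟩)

end Relational

end Tp

/-! ### Derivable sequents give accepted words -/

namespace StackTypes

open Tp

/-- The binary code of a stack. -/
def encodeStack (m : ℕ) : List ℕ → List Bool
  | [] => []
  | g :: γ => List.replicate (m - g + 1) true ++ (List.replicate (g + 1) false ++ encodeStack m γ)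

/-- Acceptance on binary stacks, where a symbol may be read from a longer code. -/
def BinAccepts {α : Type} (R : α → List (ℕ × List ℕ)) (m : ℕ) : List α → List Bool → Prop
  | [], σ => σ = []
  | a :: w, σ => ∃ r ∈ R a, ∃ i j ρ, r.1 + 1 ≤ i ∧ m - r.1 + 1 ≤ j ∧
      σ = List.replicate j true ++ (List.replicate i false ++ ρ) ∧
      BinAccepts R m w (encodeStack m r.2 ++ ρ)

/-- One of the listed transitions leads to acceptance of `w` from the binary stack `σ`. -/
def AcceptsVia {α : Type} (R : α → List (ℕ × List ℕ)) (m : ℕ) (l : List (ℕ × List ℕ))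
    (w : List α) (σ : List Bool) : Prop :=
  ∃ r ∈ l, ∃ i j ρ, r.1 + 1 ≤ i ∧ m - r.1 + 1 ≤ j ∧
    σ = List.replicate j true ++ (List.replicate i false ++ ρ) ∧
    BinAccepts R m w (encodeStack m r.2 ++ ρ)

theorem AcceptsVia.mono {α : Type} {R : α → List (ℕ × List ℕ)} {m : ℕ}
    {l l' : List (ℕ × List ℕ)} (hl : l ⊆ l') {w : List α} {σ : List Bool}
    (h : AcceptsVia R m l w σ) : AcceptsVia R m l' w σ := by
  obtain ⟨r, hr, h⟩ := h
  exact ⟨r, hl hr, h⟩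

theorem not_binAccepts_false_cons {α : Type} (R : α → List (ℕ × List ℕ)) (m : ℕ) (w : List α)
    (σ : List Bool) : ¬ BinAccepts R m w (false :: σ) := by
  cases w with
  | nil => simp [BinAccepts]
  | cons a w =>
    rintro ⟨r, -, i, j, σ', -, hj, h, -⟩
    obtain ⟨j, rfl⟩ : ∃ k, j = k + 1 := ⟨j - 1, by omega⟩
    simp [List.replicate_succ] at h

theorem replicate_append_cons_inj {a b : Bool} (hab : a ≠ b) {i j : ℕ} {σ τ : List Bool}
    (h : List.replicate i a ++ b :: σ = List.replicate j a ++ b :: τ) : i = j ∧ σ = τ := by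
  induction i generalizing j with
  | zero => cases j <;> simp_all [List.replicate_succ]
  | succ i ih =>
    cases j with
    | zero => simp_all [List.replicate_succ]
    | succ j => simpa using ih (by simpa [List.replicate_succ] using h)

theorem encodeStack_ne_false_cons (m : ℕ) (γ : List ℕ) (σ : List Bool) :
    encodeStack m γ ≠ false :: σ := by
  cases γ <;> simp [encodeStack, List.replicate_succ]

theorem encodeStack_append (m : ℕ) (β γ : List ℕ) :
    encodeStack m (β ++ γ) = encodeStack m β ++ encodeStack m γ := by
  induction β with
  | nil => rfl
  | cons g β ih => simp [encodeStack, ih]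

theorem encodeStack_cons_eq {m g h i j : ℕ} (hg : g ≤ m) (hh : h ≤ m) {γ : List ℕ}
    {σ : List Bool} (hi : g + 1 ≤ i) (hj : m - g + 1 ≤ j)
    (heq : encodeStack m (h :: γ) = List.replicate j true ++ (List.replicate i false ++ σ)) :
    h = g ∧ σ = encodeStack m γ := by
  obtain ⟨i, rfl⟩ : ∃ k, i = k + 1 := ⟨i - 1, by omega⟩
  simp only [encodeStack, List.replicate_succ (n := h), List.replicate_succ (n := i),
    List.cons_append] at heq
  obtain ⟨h₁, h₂⟩ := replicate_append_cons_inj (by simp) heq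
  obtain ⟨k, rfl⟩ : ∃ k, i = h + k := ⟨i - h, by omega⟩
  rw [List.replicate_add, List.append_assoc, List.append_cancel_left_eq] at h₂
  cases k with
  | zero => exact ⟨by omega, by simpa using h₂.symm⟩
  | succ k => exact absurd h₂ (by simpa [List.replicate_succ] using encodeStack_ne_false_cons m γ _)

theorem accepts_of_binAccepts {α : Type} {R : α → List (ℕ × List ℕ)} {m : ℕ}
    (hR : ∀ a, ∀ r ∈ R a, r.1 ≤ m ∧ ∀ g ∈ r.2, g ≤ m) {w : List α} {γ : List ℕ}
    (hγ : ∀ g ∈ γ, g ≤ m) (h : BinAccepts R m w (encodeStack m γ)) : Accepts R w γ := by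
  induction w generalizing γ with
  | nil =>
    cases γ with
    | nil => exact Accepts.nil
    | cons g γ => simp [BinAccepts, encodeStack] at h
  | cons a w ih =>
    obtain ⟨r, hr, i, j, σ, hi, hj, heq, hacc⟩ := h
    cases γ with
    | nil =>
      exfalso
      have := congrArg List.length heq
      simp [encodeStack] at this
      omega
    | cons h γ =>
      have hh : h ≤ m := hγ h List.mem_cons_self
      obtain ⟨rfl, rfl⟩ := encodeStack_cons_eq (hR a r hr).1 hh hi hj heq
      rw [← encodeStack_append] at hacc
      refine Accepts.step hr (ih (fun g hg => ?_) hacc)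
      rcases List.mem_append.1 hg with hg | hg
      · exact (hR a r hr).2 g hg
      · exact hγ g (List.mem_cons_of_mem _ hg)

/-- The points of the relational model. -/
inductive Point (α : Type) : Type where
  | inp : List α → Point α
  | stk : List Bool → Point α
  | fin : List Bool → Point α
  | out : List Bool → Point α
  | wit : List Bool → Point α
  | testA : List (ℕ × List ℕ) → List Bool → Point α
  | testB : List (ℕ × List ℕ) → List Bool → Point α
  | testC : List (ℕ × List ℕ) → List Bool → Point α

namespace Point

/-- The transitive relation of the model. -/
inductive Before {α : Type} : Point α → Point α → Prop
  | inp (w : List α) (q : Point α) : Before (inp w) q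
  | stk_stk (σ τ : List Bool) : τ ≠ [] → Before (stk σ) (stk (τ ++ σ))
  | stk_fin (σ τ : List Bool) : Before (stk σ) (fin τ)
  | stk_out (σ τ : List Bool) : Before (stk σ) (out τ)
  | stk_wit (σ τ : List Bool) : Before (stk σ) (wit τ)
  | stk_testA (σ τ : List Bool) (l : List (ℕ × List ℕ)) : Before (stk σ) (testA l τ)
  | stk_testB (σ τ : List Bool) (l : List (ℕ × List ℕ)) : Before (stk σ) (testB l τ)
  | stk_testC (σ τ : List Bool) (l : List (ℕ × List ℕ)) : Before (stk σ) (testC l τ)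
  | fin_fin (σ : List Bool) : Before (fin σ) (fin σ)
  | fin_out (σ : List Bool) : Before (fin σ) (out σ)
  | fin_testA (σ : List Bool) (l : List (ℕ × List ℕ)) : Before (fin σ) (testA l σ)
  | fin_testB (σ : List Bool) (l : List (ℕ × List ℕ)) : Before (fin σ) (testB l σ)
  | fin_testC (σ : List Bool) (l : List (ℕ × List ℕ)) : Before (fin σ) (testC l σ)
  | testA_testB (σ : List Bool) (l : List (ℕ × List ℕ)) : Before (testA l σ) (testB l σ)
  | testA_testC (σ : List Bool) (l : List (ℕ × List ℕ)) : Before (testA l σ) (testC l σ)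
  | testB_testC (σ : List Bool) (l : List (ℕ × List ℕ)) : Before (testB l σ) (testC l σ)

theorem Before.trans {α : Type} (p q r : Point α) (h₁ : Before p q) (h₂ : Before q r) :
    Before p r := by
  cases h₁ with
  | stk_stk σ τ hτ =>
    cases h₂ with
    | stk_stk _ τ' hτ' =>
      rw [← List.append_assoc]
      exact .stk_stk _ _ (by simp [hτ])
    | _ => constructor
  | _ => cases h₂ <;> constructor

/-- The relations assigned to the primitive types. -/
inductive Val {α : Type} (R : α → List (ℕ × List ℕ)) (m : ℕ) :
    ℕ → Point α → Point α → Prop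
  | accept {w : List α} {σ : List Bool} : BinAccepts R m w σ → Val R m 0 (inp w) (out σ)
  | finish (σ : List Bool) : Val R m 1 (stk σ) (fin σ)
  | false_fin (σ τ : List Bool) : Val R m 2 (stk σ) (fin (τ ++ σ))
  | false_wit (σ : List Bool) (n : ℕ) : Val R m 2 (stk σ) (wit (List.replicate n false ++ σ))
  | true_fin (σ τ : List Bool) : Val R m 3 (stk σ) (fin (τ ++ σ))
  | true_wit (σ : List Bool) (n : ℕ) : Val R m 3 (stk σ) (wit (List.replicate n true ++ σ))
  | testB {w : List α} {σ : List Bool} {l : List (ℕ × List ℕ)} :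
      AcceptsVia R m l.tail w σ → Val R m 4 (inp w) (testB l σ)
  | testC {w : List α} {σ : List Bool} {l : List (ℕ × List ℕ)} :
      AcceptsVia R m l w σ → Val R m 4 (inp w) (testC l σ)
  | output (σ : List Bool) : Val R m 5 (fin σ) (out σ)

theorem Val.before {α : Type} (R : α → List (ℕ × List ℕ)) (m n : ℕ) (p q : Point α)
    (h : Val R m n p q) : Before p q := by
  cases h <;> constructor

end Point

section Model

open Point

variable {α : Type} {R : α → List (ℕ × List ℕ)} {m : ℕ}

theorem den_popK {p : Point α} {σ' : List Bool} :
    den Before (Val R m) popK p (stk σ') ↔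
      ∃ n σ, 1 ≤ n ∧ p = stk σ ∧ σ' = List.replicate n false ++ σ := by
  constructor
  · rintro ⟨hW, h⟩
    have h₁ : Val R m 2 p (wit σ') := h (wit σ') (Val.false_wit σ' 0)
    cases h₁ with
    | false_wit σ n =>
      refine ⟨n, σ, ?_, rfl, rfl⟩
      by_contra hn
      obtain rfl : n = 0 := by omega
      generalize hρ : List.replicate 0 false ++ σ = ρ at hW
      cases hW with
      | stk_stk _ τ hτ => simp [hτ] at hρ
  · rintro ⟨n, σ, hn, rfl, rfl⟩
    refine ⟨.stk_stk _ _ (by simp; omega), fun o ho => ?_⟩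
    change Val R m 2 _ o at ho
    change Val R m 2 _ o
    cases ho with
    | false_fin _ τ => rw [← List.append_assoc]; exact .false_fin _ _
    | false_wit _ k => rw [← List.append_assoc, ← List.replicate_add]; exact .false_wit _ _

theorem den_popL {p : Point α} {σ' : List Bool} :
    den Before (Val R m) popL p (stk σ') ↔
      ∃ n σ, 1 ≤ n ∧ p = stk σ ∧ σ' = List.replicate n true ++ σ := by
  constructor
  · rintro ⟨hW, h⟩
    have h₁ : Val R m 3 p (wit σ') := h (wit σ') (Val.true_wit σ' 0)
    cases h₁ with
    | true_wit σ n =>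
      refine ⟨n, σ, ?_, rfl, rfl⟩
      by_contra hn
      obtain rfl : n = 0 := by omega
      generalize hρ : List.replicate 0 true ++ σ = ρ at hW
      cases hW with
      | stk_stk _ τ hτ => simp [hτ] at hρ
  · rintro ⟨n, σ, hn, rfl, rfl⟩
    refine ⟨.stk_stk _ _ (by simp; omega), fun o ho => ?_⟩
    change Val R m 3 _ o at ho
    change Val R m 3 _ o
    cases ho with
    | true_fin _ τ => rw [← List.append_assoc]; exact .true_fin _ _
    | true_wit _ k => rw [← List.append_assoc, ← List.replicate_add]; exact .true_wit _ _

/-- `A` pushes arbitrary positive numbers of copies of the bit `b`. -/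
def Pushes (R : α → List (ℕ × List ℕ)) (m : ℕ) (A : Tp) (b : Bool) : Prop :=
  ∀ (p : Point α) (σ' : List Bool), den Before (Val R m) A p (stk σ') ↔
    ∃ n σ, 1 ≤ n ∧ p = stk σ ∧ σ' = List.replicate n b ++ σ

theorem Pushes.den_iterate {A : Tp} {b : Bool} (hA : Pushes R m A b) {X : Tp} (n : ℕ)
    {σ : List Bool} {q : Point α}
    (h : den Before (Val R m) X (stk (List.replicate n b ++ σ)) q) :
    den Before (Val R m) ((mul A)^[n] X) (stk σ) q := by
  induction n generalizing X with
  | zero => exact h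
  | succ n ih =>
    refine ih (X := mul A X) ⟨_, (hA _ _).2 ⟨1, _, le_rfl, rfl, rfl⟩, ?_⟩
    simpa [← List.append_assoc, List.replicate_succ] using h

theorem Pushes.exists_of_den_iterate {A : Tp} {b : Bool} (hA : Pushes R m A b) {X : Tp}
    (hX : ∀ p q, den Before (Val R m) X p q → ∃ σ : List Bool, p = stk σ) (n : ℕ)
    {p q : Point α} (h : den Before (Val R m) ((mul A)^[n] X) p q) :
    ∃ i σ, n ≤ i ∧ p = stk σ ∧ den Before (Val R m) X (stk (List.replicate i b ++ σ)) q := by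
  induction n generalizing p with
  | zero =>
    obtain ⟨σ, rfl⟩ := hX p q h
    exact ⟨0, σ, le_rfl, rfl, h⟩
  | succ n ih =>
    rw [Function.iterate_succ_apply'] at h
    obtain ⟨o, h₁, h₂⟩ := h
    obtain ⟨i, σ', hi, rfl, h₃⟩ := ih h₂
    obtain ⟨k, σ, hk, rfl, rfl⟩ := (hA _ _).1 h₁
    refine ⟨i + k, σ, by omega, rfl, ?_⟩
    rwa [List.replicate_add, List.append_assoc]

theorem pushes_popK : Pushes R m popK false := fun _ _ => den_popK

theorem pushes_popL : Pushes R m popL true := fun _ _ => den_popL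

theorem den_bottom (n : ℕ) {p q : Point α} :
    den Before (Val R m) (bottom n) p q ↔ ∃ σ : List Bool, p = stk σ ∧ q = fin σ := by
  have hfin : ∀ {σ : List Bool} {q : Point α} {k : ℕ}, Before (fin σ) q → k = 2 ∨ k = 3 →
      Val R m k (stk σ) q → q = fin σ := by
    rintro σ q k hW (rfl | rfl) hv <;> cases hW <;> first | rfl | cases hv
  have h23 : ∀ σ : List Bool, den Before (Val R m) (ldiv (pr 2) (pr 3)) (fin σ) (fin σ) := by
    refine fun σ => ⟨.fin_fin σ, fun o ho => ?_⟩
    change Val R m 2 o _ at ho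
    cases ho
    exact Val.true_fin _ _
  have h32 : ∀ σ : List Bool, den Before (Val R m) (ldiv (pr 3) (pr 2)) (fin σ) (fin σ) := by
    refine fun σ => ⟨.fin_fin σ, fun o ho => ?_⟩
    change Val R m 3 o _ at ho
    cases ho
    exact Val.false_fin _ _
  induction n generalizing p q with
  | zero =>
    constructor
    · rintro ⟨o, ⟨o', h₁, h₂, h₂'⟩, h₃, h₃'⟩
      change Val R m 1 _ _ at h₁
      cases h₁ with
      | finish σ =>
        obtain rfl := hfin h₂ (.inr rfl) (h₂' _ (Val.finish σ))
        exact ⟨σ, rfl, hfin h₃ (.inl rfl) (h₃' _ (Val.true_fin σ []))⟩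
    · rintro ⟨σ, rfl, rfl⟩
      refine ⟨fin σ, ⟨fin σ, Val.finish σ, .fin_fin σ, fun o ho => ?_⟩, h32 σ⟩
      change Val R m 1 o _ at ho
      cases ho
      exact Val.true_fin σ []
  | succ n ih =>
    constructor
    · rintro ⟨o, ⟨o', h₁, h₂, h₂'⟩, h₃, h₃'⟩
      obtain ⟨σ, rfl, rfl⟩ := ih.1 h₁
      obtain rfl := hfin h₂ (.inr rfl) (h₂' _ (Val.false_fin σ []))
      exact ⟨σ, rfl, hfin h₃ (.inl rfl) (h₃' _ (Val.true_fin σ []))⟩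
    · rintro ⟨σ, rfl, rfl⟩
      exact ⟨fin σ, ⟨fin σ, ih.2 ⟨σ, rfl, rfl⟩, h23 σ⟩, h32 σ⟩

theorem exists_of_den_iterate_bottom {i j n : ℕ} {p q : Point α}
    (h : den Before (Val R m) ((mul popK)^[i] ((mul popL)^[j] (bottom n))) p q) :
    ∃ i' j' σ, i ≤ i' ∧ j ≤ j' ∧ p = stk σ ∧
      q = fin (List.replicate j' true ++ (List.replicate i' false ++ σ)) := by
  have hb : ∀ p q, den Before (Val R m) (bottom n) p q → ∃ σ : List Bool, p = stk σ := by
    intro p q h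
    obtain ⟨σ, hp, -⟩ := (den_bottom n).1 h
    exact ⟨σ, hp⟩
  obtain ⟨i', σ, hi, rfl, h₁⟩ := pushes_popK.exists_of_den_iterate (fun p q h => by
    obtain ⟨_, σ, _, hp, _⟩ := pushes_popL.exists_of_den_iterate hb j h
    exact ⟨σ, hp⟩) i h
  obtain ⟨j', σ', hj, hσ, h₂⟩ := pushes_popL.exists_of_den_iterate hb j h₁
  cases hσ
  obtain ⟨ρ, hρ, rfl⟩ := (den_bottom n).1 h₂
  cases hρ
  exact ⟨i', j', σ, hi, hj, rfl, rfl⟩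

theorem den_stackTp {γ : List ℕ} {X : Tp} {σ : List Bool} {q : Point α}
    (h : den Before (Val R m) X (stk (encodeStack m γ ++ σ)) q) :
    den Before (Val R m) (stackTp m γ X) (stk σ) q := by
  induction γ generalizing X with
  | nil => exact h
  | cons g γ ih =>
    refine ih (X := block m g X) (pushes_popK.den_iterate _ (pushes_popL.den_iterate _ ?_))
    simpa [encodeStack] using h

theorem den_stackTp_bottom (γ : List ℕ) (n : ℕ) (σ : List Bool) :
    den Before (Val R m) (stackTp m γ (bottom n)) (stk σ) (fin (encodeStack m γ ++ σ)) :=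
  den_stackTp ((den_bottom n).2 ⟨_, rfl, rfl⟩)

theorem binAccepts_of_den_accept {X : Tp} {p q : Point α} {τ : List Bool}
    (h : den Before (Val R m) (accept X) p q) (hX : den Before (Val R m) X q (fin τ)) :
    ∃ w, p = inp w ∧ BinAccepts R m w τ := by
  have : Val R m 0 p (out τ) := h.2 (out τ) ⟨fin τ, hX, Val.output τ⟩
  cases this with
  | accept h => exact ⟨_, rfl, h⟩

theorem acceptsVia_of_den_ruleTp {N : ℕ} {r : ℕ × List ℕ} {p q : Point α}
    (h : den Before (Val R m) (ruleTp m N r) p q) :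
    ∃ w σ, p = inp w ∧ q = fin σ ∧ AcceptsVia R m [r] w σ := by
  obtain ⟨o, h₁, h₂⟩ := h
  obtain ⟨i, j, σ, hi, hj, rfl, rfl⟩ := exists_of_den_iterate_bottom h₂
  obtain ⟨w, rfl, hw⟩ := binAccepts_of_den_accept h₁ (den_stackTp_bottom r.2 N σ)
  exact ⟨w, _, rfl, rfl, r, by simp, i, j, σ, hi, hj, rfl, hw⟩

theorem not_den_lowerTp {N : ℕ} {p q : Point α} : ¬ den Before (Val R m) (lowerTp m N) p q := by
  rintro ⟨o, h₁, h₂⟩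
  obtain ⟨i, j, σ, -, -, rfl, -⟩ := exists_of_den_iterate_bottom h₂
  obtain ⟨w, -, hw⟩ := binAccepts_of_den_accept h₁ (Val.false_fin σ [false])
  exact not_binAccepts_false_cons R m w σ hw

theorem acceptsVia_of_den_joinTp {N : ℕ} {l : List (ℕ × List ℕ)} {p : Point α} {σ : List Bool}
    (h : den Before (Val R m) (joinTp m N l) p (fin σ)) :
    ∃ w, p = inp w ∧ AcceptsVia R m l w σ := by
  induction l generalizing p with
  | nil => exact absurd h not_den_lowerTp
  | cons r l ih =>
    have hC : ∀ {p q : Point α}, Before p q →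
        den Before (Val R m) (ldiv (lowerTp m N) (pr 4)) p q :=
      fun h => ⟨h, fun o ho => absurd ho not_den_lowerTp⟩
    have key : Val R m 4 p (testC (r :: l) σ) := by
      refine h.2 _ ⟨testA (r :: l) σ, ⟨.fin_testA _ _, fun o ho => ?_⟩,
        testB (r :: l) σ, hC (.testA_testB _ _), .testB_testC _ _, fun o ho => ?_⟩
      · have hW := ho.1
        cases hW with
        | testA_testB =>
          refine ⟨.fin_testB _ _, fun o ho => ?_⟩
          obtain ⟨w, rfl, hw⟩ := ih ho
          exact Val.testB hw
        | testA_testC =>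
          refine ⟨.fin_testC _ _, fun o ho => ?_⟩
          obtain ⟨w, rfl, hw⟩ := ih ho
          exact Val.testC (hw.mono (by simp))
      · refine ⟨ho.1.trans _ _ _ (.testB_testC _ _), fun o' ho' => ?_⟩
        obtain ⟨w, ρ, rfl, rfl, hw⟩ := acceptsVia_of_den_ruleTp ho'
        have hW := ho.1
        cases hW
        exact Val.testC (hw.mono (by simp))
    cases key with
    | testC h => exact ⟨_, rfl, h⟩

theorem den_letterTp (N : ℕ) (a : α) (w : List α) :
    den Before (Val R m) (letterTp m N (R a)) (inp (a :: w)) (inp w) := by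
  refine ⟨.inp _ _, ?_⟩
  rintro o ⟨q, h₁, h₂⟩
  change Val R m 5 _ _ at h₂
  cases h₂ with
  | output σ =>
    obtain ⟨w', hw', h⟩ := acceptsVia_of_den_joinTp h₁
    cases hw'
    exact Val.accept h

theorem denList_letterTp (N : ℕ) (w : List α) :
    denList Before (Val R m) (w.map fun a => letterTp m N (R a)) (inp w) (inp []) := by
  induction w with
  | nil => rfl
  | cons a w ih => exact ⟨_, den_letterTp N a w, ih⟩

theorem accepts_of_derL_targetTp {N g : ℕ} (hR : ∀ a, ∀ r ∈ R a, r.1 ≤ m ∧ ∀ g ∈ r.2, g ≤ m)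
    (hg : g ≤ m) {w : List α} (h : DerL (w.map fun a => letterTp m N (R a)) (targetTp m N g)) :
    Accepts R w [g] := by
  have hH := den_of_derL Before.trans (Val.before R m) h (denList_letterTp N w)
  have key : Val R m 0 (inp w) (out (encodeStack m [g] ++ [])) := by
    refine hH.2 _ ⟨stk [], ⟨.inp _ _, ?_⟩, _, den_stackTp_bottom [g] N [], Val.output _⟩
    rintro o ⟨q, h₁, h₂⟩
    obtain ⟨σ, hσ, rfl⟩ := (den_bottom N).1 h₁
    cases hσ
    change Val R m 5 _ _ at h₂
    cases h₂
    exact Val.accept rfl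
  generalize hρ : encodeStack m [g] ++ [] = ρ at key
  cases key with
  | accept h =>
    rw [List.append_nil] at hρ
    subst hρ
    exact accepts_of_binAccepts hR (by simpa using hg) h

end Model

theorem accepts_iff_derL {α : Type} {R : α → List (ℕ × List ℕ)} {m N g : ℕ}
    (hR : ∀ a, ∀ r ∈ R a, r.1 ≤ m ∧ (∀ h ∈ r.2, h ≤ m) ∧ r.2.length ≤ N) (hg : g ≤ m)
    {w : List α} (hw : w ≠ []) :
    Accepts R w [g] ↔ DerL (w.map fun a => letterTp m N (R a)) (targetTp m N g) :=
  ⟨derL_targetTp_of_accepts (fun a r hr => ⟨(hR a r hr).1, (hR a r hr).2.2⟩) hw,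
    accepts_of_derL_targetTp (fun a r hr => ⟨(hR a r hr).1, (hR a r hr).2.1⟩) hg⟩

end StackTypes

/-! ### Derivations of a context-free grammar -/

/-- The sentential form rewrites to the word, by independent derivations of its symbols. -/
inductive Yields {T : Type} (G : CFG T) : List (T ⊕ ℕ) → List T → Prop
  | nil : Yields G [] []
  | term {a : T} {γ : List (T ⊕ ℕ)} {w : List T} :
      Yields G γ w → Yields G (Sum.inl a :: γ) (a :: w)
  | rule {r : ℕ × List (T ⊕ ℕ)} {γ : List (T ⊕ ℕ)} {u w : List T} :
      r ∈ G.2 → Yields G r.2 u → Yields G γ w → Yields G (Sum.inr r.1 :: γ) (u ++ w)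

namespace Yields

variable {T : Type} {G : CFG T}

theorem append {γ δ : List (T ⊕ ℕ)} {u v : List T} (h₁ : Yields G γ u) (h₂ : Yields G δ v) :
    Yields G (γ ++ δ) (u ++ v) := by
  induction h₁ with
  | nil => exact h₂
  | term _ ih => exact ih.term
  | rule hr h _ _ ih => rw [List.append_assoc]; exact .rule hr h ih

theorem split {γ δ : List (T ⊕ ℕ)} {w : List T} (h : Yields G (γ ++ δ) w) :
    ∃ u v, w = u ++ v ∧ Yields G γ u ∧ Yields G δ v := by
  induction γ generalizing w with
  | nil => exact ⟨[], w, rfl, .nil, h⟩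
  | cons s γ ih =>
    cases h with
    | term h =>
      obtain ⟨u, v, rfl, h₁, h₂⟩ := ih h
      exact ⟨_, v, rfl, h₁.term, h₂⟩
    | rule hr h₀ h =>
      obtain ⟨u, v, rfl, h₁, h₂⟩ := ih h
      exact ⟨_, v, (List.append_assoc _ _ _).symm, .rule hr h₀ h₁, h₂⟩

theorem map_inl (w : List T) : Yields G (w.map Sum.inl) w := by
  induction w with
  | nil => exact .nil
  | cons a w ih => exact ih.term

theorem singleton_of_rule {r : ℕ × List (T ⊕ ℕ)} (hr : r ∈ G.2) {u : List T}
    (h : Yields G r.2 u) : Yields G [Sum.inr r.1] u := by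
  simpa using Yields.rule hr h .nil

theorem of_step {x y : List (T ⊕ ℕ)} (h : CFGStep G x y) {w : List T} (hy : Yields G y w) :
    Yields G x w := by
  obtain ⟨r, hr, p, q, rfl, rfl⟩ := h
  obtain ⟨u, v, rfl, h₁, h₂⟩ := hy.split
  obtain ⟨u₁, u₂, rfl, h₃, h₄⟩ := h₁.split
  rw [List.append_assoc]
  exact h₃.append (.rule hr h₄ h₂)

theorem steps_append {x y : List (T ⊕ ℕ)} (h : Relation.ReflTransGen (CFGStep G) x y)
    (p q : List (T ⊕ ℕ)) :
    Relation.ReflTransGen (CFGStep G) (p ++ x ++ q) (p ++ y ++ q) := by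
  refine h.lift (fun x => p ++ x ++ q) ?_
  rintro _ _ ⟨r, hr, p', q', rfl, rfl⟩
  exact ⟨r, hr, p ++ p', q' ++ q, by simp, by simp⟩

theorem steps {γ : List (T ⊕ ℕ)} {w : List T} (h : Yields G γ w) :
    Relation.ReflTransGen (CFGStep G) γ (w.map Sum.inl) := by
  induction h with
  | nil => exact .refl
  | @term a γ w _ ih => simpa using steps_append ih [Sum.inl a] []
  | @rule r γ u w hr _ _ ih₁ ih₂ =>
    refine Relation.ReflTransGen.head (b := r.2 ++ γ) ⟨r, hr, [], γ, rfl, rfl⟩ ?_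
    have h₁ := steps_append ih₁ [] γ
    have h₂ := steps_append ih₂ (u.map Sum.inl) []
    simp only [List.nil_append, List.append_nil] at h₁ h₂
    simpa using h₁.trans h₂

end Yields

theorem mem_lang_iff_yields {T : Type} {G : CFG T} {w : List T} :
    w ∈ Lang G ↔ Yields G [Sum.inr G.1] w := by
  refine ⟨fun h => ?_, Yields.steps⟩
  have h : Relation.ReflTransGen (CFGStep G) [Sum.inr G.1] (w.map Sum.inl) := h
  generalize [Sum.inr G.1] = γ at h
  induction h using Relation.ReflTransGen.head_induction_on with
  | refl => exact Yields.map_inl w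
  | head h _ ih => exact Yields.of_step h ih

/-! ### The left-corner automaton of a grammar -/

namespace LeftCorner

/-- Grammar symbols. -/
abbrev Sym : Type := ℕ ⊕ ℕ

/-- Stack symbols: `(none, D)` expects a word derived from `D`, and `(some X, D)` expects a word
completing each word derived from `X` to one derived from `D`. -/
abbrev Goal : Type := Option Sym × Sym

/-- The start symbol and the symbols occurring on the right-hand sides of rules. -/
def syms (G : CFG ℕ) : List Sym := Sum.inr G.1 :: G.2.flatMap Prod.snd

/-- Unit rules, reversed. -/
def unitEdges (G : CFG ℕ) : List (Sym × Sym) :=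
  G.2.flatMap fun r => if r.2.length = 1 then r.2.map fun X => (X, Sum.inr r.1) else []

/-- Adds an edge to a transitive relation and closes the result under composition. -/
def addEdge (P : List (Sym × Sym)) (e : Sym × Sym) : List (Sym × Sym) :=
  P ++ (e.1 :: (P.filter fun q => q.2 = e.1).map Prod.fst).flatMap fun x =>
    (e.2 :: (P.filter fun q => q.1 = e.2).map Prod.snd).map fun y => (x, y)

/-- The transitive closure of the reversed unit rules. -/
def unitPairs (G : CFG ℕ) : List (Sym × Sym) := (unitEdges G).foldl addEdge []

/-- `Y` derives `X` by unit rules. -/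
def Reach (G : CFG ℕ) (X Y : Sym) : Prop := X = Y ∨ ∃ q ∈ unitPairs G, q = (X, Y)

instance (G : CFG ℕ) (X Y : Sym) : Decidable (Reach G X Y) :=
  inferInstanceAs (Decidable (X = Y ∨ ∃ q ∈ unitPairs G, q = (X, Y)))

/-- The stacks by which one may continue towards `D` after a word derived from `X`. -/
def conts (G : CFG ℕ) (X D : Sym) : List (List Goal) :=
  (if Reach G X D then [[]] else []) ++
    ((syms G).filter fun Y => Reach G X Y).map fun Y => [(some Y, D)]

/-- Transitions by which the letter `a` starts a derivation from a goal. -/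
def startRules (G : CFG ℕ) (a : ℕ) : List (Goal × List Goal) :=
  (syms G).flatMap fun D => (conts G (Sum.inl a) D).map fun o => ((none, D), o)

/-- The rules by which the letter `a` begins the second symbol `s` of the right-hand side of `r`,
after the first symbol `X`, on the way to `D`. -/
def stepRule (G : CFG ℕ) (a : ℕ) (r : ℕ × List Sym) (X s D : Sym) :
    List (Goal × List Goal) :=
  (conts G (Sum.inl a) s).flatMap fun o₁ => (conts G (Sum.inr r.1) D).map fun o₂ =>
    ((some X, D), o₁ ++ (r.2.tail.tail.map (fun t => ((none, t) : Goal)) ++ o₂))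

/-- Transitions by which the letter `a` continues after a left corner. -/
def stepRules (G : CFG ℕ) (a : ℕ) : List (Goal × List Goal) :=
  G.2.flatMap fun r => (r.2.take 1).flatMap fun X => (r.2.tail.take 1).flatMap fun s =>
    (syms G).flatMap fun D => stepRule G a r X s D

/-- All transitions of the letter `a`. -/
def rules (G : CFG ℕ) (a : ℕ) : List (Goal × List Goal) := startRules G a ++ stepRules G a

/-- All transitions of the letter `a`, with numbered stack symbols. -/
def numRules (G : CFG ℕ) (a : ℕ) : List (ℕ × List ℕ) :=
  (rules G a).map fun p => (Encodable.encode p.1, p.2.map Encodable.encode)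

/-- The stack symbols in use. -/
def goals (G : CFG ℕ) : List Goal :=
  (syms G).map (fun D => (none, D)) ++
    (syms G).flatMap fun X => (syms G).map fun D => (some X, D)

/-- A bound for the numbers of stack symbols. -/
def maxGoal (G : CFG ℕ) : ℕ := (goals G).foldr (fun g n => Encodable.encode g + n) 0

/-- A bound for the lengths of the stacks pushed by the transitions. -/
def maxPush (G : CFG ℕ) : ℕ := (syms G).length + 2

theorem mem_addEdge {P : List (Sym × Sym)} {e : Sym × Sym} {x y : Sym} :
    (x, y) ∈ addEdge P e ↔
      (x, y) ∈ P ∨ (x = e.1 ∨ (x, e.1) ∈ P) ∧ (y = e.2 ∨ (e.2, y) ∈ P) := by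
  simp only [addEdge, List.mem_append, List.mem_flatMap, List.mem_cons, List.mem_map,
    List.mem_filter, decide_eq_true_eq, Prod.mk.injEq]
  refine or_congr_right ⟨?_, ?_⟩
  · rintro ⟨_, h₁, _, h₂, rfl, rfl⟩
    refine ⟨h₁.imp_right ?_, h₂.imp_right ?_⟩
    · rintro ⟨q, ⟨hq, h⟩, rfl⟩
      rwa [← h]
    · rintro ⟨q, ⟨hq, h⟩, rfl⟩
      rwa [← h]
  · rintro ⟨h₁, h₂⟩
    exact ⟨x, h₁.imp_right fun h => ⟨_, ⟨h, rfl⟩, rfl⟩, y, h₂.imp_right fun h => ⟨_, ⟨h, rfl⟩, rfl⟩,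
      rfl, rfl⟩

theorem foldl_addEdge (es : List (Sym × Sym)) {P : List (Sym × Sym)}
    (hP : ∀ x y z, (x, y) ∈ P → (y, z) ∈ P → (x, z) ∈ P) :
    (∀ x y z, (x, y) ∈ es.foldl addEdge P → (y, z) ∈ es.foldl addEdge P →
      (x, z) ∈ es.foldl addEdge P) ∧
    P ⊆ es.foldl addEdge P ∧ es ⊆ es.foldl addEdge P := by
  induction es generalizing P with
  | nil => exact ⟨hP, by simp, by simp⟩
  | cons e es ih =>
    have hP' : ∀ x y z, (x, y) ∈ addEdge P e → (y, z) ∈ addEdge P e → (x, z) ∈ addEdge P e := by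
      intro x y z
      simp only [mem_addEdge]
      grind
    obtain ⟨h₁, h₂, h₃⟩ := ih hP'
    refine ⟨h₁, fun q hq => h₂ (mem_addEdge.2 (.inl hq)), fun q hq => ?_⟩
    rcases List.mem_cons.1 hq with rfl | hq
    · exact h₂ (mem_addEdge.2 (.inr ⟨.inl rfl, .inl rfl⟩))
    · exact h₃ hq

theorem foldl_addEdge_sound {Q : Sym → Sym → Prop} (hQ : ∀ x y z, Q x y → Q y z → Q x z)
    {es P : List (Sym × Sym)} (hes : ∀ q ∈ es, Q q.1 q.2) (hP : ∀ q ∈ P, Q q.1 q.2) :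
    ∀ q ∈ es.foldl addEdge P, Q q.1 q.2 := by
  induction es generalizing P with
  | nil => exact hP
  | cons e es ih =>
    refine ih (fun q hq => hes q (List.mem_cons_of_mem _ hq)) ?_
    rintro ⟨x, y⟩ hq
    have he := hes e List.mem_cons_self
    rcases mem_addEdge.1 hq with hq | ⟨h₁, h₂⟩
    · exact hP _ hq
    · have h₃ : Q x e.2 := by
        rcases h₁ with rfl | h₁
        · exact he
        · exact hQ _ _ _ (hP _ h₁) he
      rcases h₂ with rfl | h₂
      · exact h₃
      · exact hQ _ _ _ h₃ (hP _ h₂)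

theorem mem_unitEdges {G : CFG ℕ} {X Y : Sym} :
    (X, Y) ∈ unitEdges G ↔ ∃ r ∈ G.2, r.2 = [X] ∧ Y = Sum.inr r.1 := by
  simp only [unitEdges, List.mem_flatMap]
  refine exists_congr fun r => and_congr_right fun _ => ?_
  by_cases h : r.2.length = 1
  · obtain ⟨Z, hZ⟩ := List.length_eq_one_iff.1 h
    simp [hZ]
    grind
  · have : r.2 ≠ [X] := fun h' => h (by simp [h'])
    simp [h, this]

theorem Reach.yields {G : CFG ℕ} {X Y : Sym} (h : Reach G X Y) {u : List ℕ}
    (hu : Yields G [X] u) : Yields G [Y] u := by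
  rcases h with rfl | ⟨_, h, rfl⟩
  · exact hu
  · refine foldl_addEdge_sound (Q := fun X Y => ∀ u, Yields G [X] u → Yields G [Y] u)
      (fun x y z h₁ h₂ u hu => h₂ u (h₁ u hu)) (es := unitEdges G) (P := []) ?_ (by simp)
      (X, Y) h u hu
    rintro ⟨X, Y⟩ hq u hu
    obtain ⟨r, hr, hX, rfl⟩ := mem_unitEdges.1 hq
    exact Yields.singleton_of_rule hr (by rwa [hX])

theorem reach_of_rule {G : CFG ℕ} {r : ℕ × List Sym} (hr : r ∈ G.2) {X Y : Sym}
    (hX : r.2 = [X]) (h : Reach G (Sum.inr r.1) Y) : Reach G X Y := by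
  obtain ⟨htrans, -, hsub⟩ := foldl_addEdge (unitEdges G) (P := []) (by simp)
  have he := hsub (mem_unitEdges.2 ⟨r, hr, hX, rfl⟩)
  rcases h with rfl | ⟨_, h, rfl⟩
  · exact .inr ⟨_, he, rfl⟩
  · exact .inr ⟨_, htrans _ _ _ he h, rfl⟩

theorem mem_conts {G : CFG ℕ} {X D : Sym} {o : List Goal} :
    o ∈ conts G X D ↔
      Reach G X D ∧ o = [] ∨ ∃ Y ∈ syms G, Reach G X Y ∧ o = [(some Y, D)] := by
  unfold conts
  split <;> simp_all [eq_comm, and_assoc]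

theorem mem_startRules {G : CFG ℕ} {a : ℕ} {p : Goal × List Goal} :
    p ∈ startRules G a ↔ ∃ D ∈ syms G, ∃ o ∈ conts G (Sum.inl a) D, p = ((none, D), o) := by
  simp [startRules, eq_comm]

theorem mem_stepRules {G : CFG ℕ} {a : ℕ} {p : Goal × List Goal} :
    p ∈ stepRules G a ↔ ∃ r ∈ G.2, ∃ X s t, r.2 = X :: s :: t ∧ ∃ D ∈ syms G,
      ∃ o₁ ∈ conts G (Sum.inl a) s, ∃ o₂ ∈ conts G (Sum.inr r.1) D,
        p = ((some X, D), o₁ ++ (t.map (fun t => ((none, t) : Goal)) ++ o₂)) := by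
  simp only [stepRules, stepRule, List.mem_flatMap, List.mem_map]
  refine exists_congr fun r => and_congr_right fun _ => ?_
  obtain ⟨A, ρ⟩ := r
  rcases ρ with _ | ⟨X, _ | ⟨s, t⟩⟩
  · simp
  · simp
  · simp only [List.take_succ_cons, List.take_zero, List.mem_singleton, List.tail_cons]
    constructor
    · rintro ⟨_, rfl, _, rfl, D, hD, o₁, h₁, o₂, h₂, rfl⟩
      exact ⟨_, _, _, rfl, D, hD, o₁, h₁, o₂, h₂, rfl⟩
    · rintro ⟨X', s', t', h, D, hD, o₁, h₁, o₂, h₂, rfl⟩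
      obtain ⟨rfl, rfl, rfl⟩ : X = X' ∧ s = s' ∧ t = t' := by simpa using h
      exact ⟨_, rfl, _, rfl, D, hD, o₁, h₁, o₂, h₂, rfl⟩

theorem mem_syms_of_rule {G : CFG ℕ} {r : ℕ × List Sym} (hr : r ∈ G.2) {X : Sym}
    (hX : X ∈ r.2) : X ∈ syms G :=
  List.mem_cons_of_mem _ (List.mem_flatMap.2 ⟨r, hr, hX⟩)

theorem start_mem_syms (G : CFG ℕ) : Sum.inr G.1 ∈ syms G := List.mem_cons_self

/-! ### Bounds -/

theorem encode_le_maxGoal {G : CFG ℕ} {g : Goal} (hg : g ∈ goals G) :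
    Encodable.encode g ≤ maxGoal G := by
  unfold maxGoal
  generalize goals G = l at hg
  induction l with
  | nil => simp at hg
  | cons h l ih =>
    rcases List.mem_cons.1 hg with rfl | hg
    · simp
    · exact (ih hg).trans (by simp)

theorem none_mem_goals {G : CFG ℕ} {D : Sym} (hD : D ∈ syms G) : (none, D) ∈ goals G := by
  simp [goals, hD]

theorem some_mem_goals {G : CFG ℕ} {X D : Sym} (hX : X ∈ syms G) (hD : D ∈ syms G) :
    (some X, D) ∈ goals G := by
  simp [goals, hD, hX]

theorem conts_subset_goals {G : CFG ℕ} {X D : Sym} (hD : D ∈ syms G) {o : List Goal}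
    (ho : o ∈ conts G X D) : o ⊆ goals G ∧ o.length ≤ 1 := by
  rcases mem_conts.1 ho with ⟨-, rfl⟩ | ⟨Y, hY, -, rfl⟩
  · simp
  · simpa using some_mem_goals hY hD

theorem length_le_of_rule {G : CFG ℕ} {r : ℕ × List Sym} (hr : r ∈ G.2) :
    r.2.length ≤ (syms G).length := by
  have : r.2.length ≤ (G.2.flatMap Prod.snd).length := by
    rw [List.length_flatMap]
    exact List.le_sum_of_mem (List.mem_map.2 ⟨r, hr, rfl⟩)
  simp only [syms, List.length_cons]
  omega

theorem rules_subset_goals {G : CFG ℕ} {a : ℕ} {p : Goal × List Goal} (hp : p ∈ rules G a) :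
    p.1 ∈ goals G ∧ p.2 ⊆ goals G ∧ p.2.length ≤ maxPush G := by
  rcases List.mem_append.1 hp with hp | hp
  · obtain ⟨D, hD, o, ho, rfl⟩ := mem_startRules.1 hp
    obtain ⟨h₁, h₂⟩ := conts_subset_goals hD ho
    exact ⟨none_mem_goals hD, h₁, h₂.trans (by simp [maxPush])⟩
  · obtain ⟨r, hr, X, s, t, hr₂, D, hD, o₁, h₁, o₂, h₂, rfl⟩ := mem_stepRules.1 hp
    have hsub : ∀ Y ∈ X :: s :: t, Y ∈ syms G := fun Y hY => mem_syms_of_rule hr (hr₂ ▸ hY)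
    obtain ⟨h₁, h₁'⟩ := conts_subset_goals (hsub s (by simp)) h₁
    obtain ⟨h₂, h₂'⟩ := conts_subset_goals hD h₂
    refine ⟨some_mem_goals (hsub X (by simp)) hD, fun g hg => ?_, ?_⟩
    · simp only [List.mem_append, List.mem_map] at hg
      rcases hg with hg | ⟨Y, hY, rfl⟩ | hg
      · exact h₁ hg
      · exact none_mem_goals (hsub Y (by simp [hY]))
      · exact h₂ hg
    · have := length_le_of_rule hr
      simp only [hr₂, List.length_cons] at this
      simp only [maxPush, List.length_append, List.length_map]
      omega

theorem numRules_bounds {G : CFG ℕ} {a : ℕ} {r : ℕ × List ℕ} (hr : r ∈ numRules G a) :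
    r.1 ≤ maxGoal G ∧ (∀ h ∈ r.2, h ≤ maxGoal G) ∧ r.2.length ≤ maxPush G := by
  obtain ⟨p, hp, rfl⟩ := List.mem_map.1 hr
  obtain ⟨h₁, h₂, h₃⟩ := rules_subset_goals hp
  refine ⟨encode_le_maxGoal h₁, fun h hh => ?_, by simpa using h₃⟩
  obtain ⟨g, hg, rfl⟩ := List.mem_map.1 hh
  exact encode_le_maxGoal (h₂ hg)

/-! ### Correctness of the automaton -/

/-- The words expected by a stack symbol. -/
def Expects (G : CFG ℕ) : Goal → List ℕ → Prop
  | (none, D), w => Yields G [D] w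
  | (some X, D), w => ∀ u, Yields G [X] u → Yields G [D] (u ++ w)

/-- The words expected by a stack. -/
def ExpectsAll (G : CFG ℕ) : List Goal → List ℕ → Prop
  | [], w => w = []
  | g :: γ, w => ∃ u v, w = u ++ v ∧ Expects G g u ∧ ExpectsAll G γ v

theorem ExpectsAll.split {G : CFG ℕ} {β γ : List Goal} {w : List ℕ}
    (h : ExpectsAll G (β ++ γ) w) :
    ∃ u v, w = u ++ v ∧ ExpectsAll G β u ∧ ExpectsAll G γ v := by
  induction β generalizing w with
  | nil => exact ⟨[], w, rfl, rfl, h⟩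
  | cons g β ih =>
    obtain ⟨u, v, rfl, h₁, h₂⟩ := h
    obtain ⟨u', v', rfl, h₃, h₄⟩ := ih h₂
    exact ⟨u ++ u', v', by simp, ⟨u, u', rfl, h₁, h₃⟩, h₄⟩

theorem ExpectsAll.yields {G : CFG ℕ} {t : List Sym} {w : List ℕ}
    (h : ExpectsAll G (t.map fun s => (none, s)) w) : Yields G t w := by
  induction t generalizing w with
  | nil => cases h; exact .nil
  | cons s t ih =>
    obtain ⟨u, v, rfl, h₁, h₂⟩ := h
    exact Yields.append (γ := [s]) h₁ (ih h₂)

theorem yields_of_mem_conts {G : CFG ℕ} {X D : Sym} {o : List Goal} (ho : o ∈ conts G X D)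
    {u v : List ℕ} (hu : ExpectsAll G o u) (hv : Yields G [X] v) : Yields G [D] (v ++ u) := by
  rcases mem_conts.1 ho with ⟨hXD, rfl⟩ | ⟨Y, -, hXY, rfl⟩
  · cases hu
    simpa using hXD.yields hv
  · obtain ⟨u, _, rfl, h, rfl⟩ := hu
    simpa using h v (hXY.yields hv)

theorem expects_of_mem_rules {G : CFG ℕ} {a : ℕ} {p : Goal × List Goal} (hp : p ∈ rules G a)
    {u : List ℕ} (hu : ExpectsAll G p.2 u) : Expects G p.1 (a :: u) := by
  have ha : Yields G [Sum.inl a] [a] := Yields.term .nil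
  rcases List.mem_append.1 hp with hp | hp
  · obtain ⟨D, -, o, ho, rfl⟩ := mem_startRules.1 hp
    exact yields_of_mem_conts ho hu ha
  · obtain ⟨r, hr, X, s, t, hr₂, D, -, o₁, h₁, o₂, h₂, rfl⟩ := mem_stepRules.1 hp
    intro x hx
    obtain ⟨u₁, _, rfl, hu₁, h⟩ := hu.split
    obtain ⟨u₂, u₃, rfl, hu₂, hu₃⟩ := h.split
    have hs := yields_of_mem_conts h₁ hu₁ ha
    have hrhs : Yields G r.2 (x ++ (([a] ++ u₁) ++ u₂)) := by
      rw [hr₂]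
      exact Yields.append (γ := [X]) hx (Yields.append (γ := [s]) hs hu₂.yields)
    simpa using yields_of_mem_conts h₂ hu₃ (Yields.singleton_of_rule hr hrhs)

open StackTypes

theorem expectsAll_of_accepts {G : CFG ℕ} {w : List ℕ} {γ : List Goal}
    (h : Accepts (numRules G) w (γ.map Encodable.encode)) : ExpectsAll G γ w := by
  generalize hs : γ.map Encodable.encode = s at h
  induction h generalizing γ with
  | nil => simp_all [ExpectsAll]
  | step hr _ ih =>
    cases γ with
    | nil => simp at hs
    | cons g γ =>
      obtain ⟨rfl, rfl⟩ := List.cons.inj hs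
      obtain ⟨p, hp, hpr⟩ := List.mem_map.1 hr
      obtain ⟨hp₁, rfl⟩ := Prod.mk.inj hpr
      obtain rfl := Encodable.encode_injective hp₁
      obtain ⟨u, v, rfl, hu, hv⟩ := (ih (γ := p.2 ++ γ) (by simp)).split
      exact ⟨_, v, rfl, expects_of_mem_rules hp hu, hv⟩

theorem accepts_append {α : Type} {R : α → List (ℕ × List ℕ)} {u v : List α} {β γ : List ℕ}
    (h₁ : Accepts R u β) (h₂ : Accepts R v γ) : Accepts R (u ++ v) (β ++ γ) := by
  induction h₁ with
  | nil => exact h₂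
  | step hr _ ih => exact .step hr (by simpa using ih)

theorem accepts_of_mem_rules {G : CFG ℕ} {a : ℕ} {g : Goal} {β : List Goal}
    (hp : (g, β) ∈ rules G a) {w : List ℕ}
    (h : Accepts (numRules G) w (β.map Encodable.encode)) :
    Accepts (numRules G) (a :: w) ([g].map Encodable.encode) :=
  .step (List.mem_map.2 ⟨_, hp, rfl⟩) (by simpa using h)

/-- The word `v` can serve as a derivative of the left corner `X`. -/
def IsCorner (G : CFG ℕ) (X : Sym) (v : List ℕ) : Prop :=
  ∃ a v', v = a :: v' ∧ ∀ D ∈ syms G, ∀ o ∈ conts G X D, ∀ w,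
    Accepts (numRules G) w (o.map Encodable.encode) →
      ∃ o' ∈ conts G (Sum.inl a) D, Accepts (numRules G) (v' ++ w) (o'.map Encodable.encode)

theorem nil_mem_conts (G : CFG ℕ) (X : Sym) : [] ∈ conts G X X :=
  mem_conts.2 (.inl ⟨.inl rfl, rfl⟩)

theorem IsCorner.accepts {G : CFG ℕ} {X : Sym} (hX : X ∈ syms G) {v : List ℕ}
    (h : IsCorner G X v) : Accepts (numRules G) v ([((none, X) : Goal)].map Encodable.encode) := by
  obtain ⟨a, v', rfl, h⟩ := h
  obtain ⟨o, ho, hacc⟩ := h X hX [] (nil_mem_conts G X) [] .nil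
  exact accepts_of_mem_rules
    (List.mem_append.2 (.inl (mem_startRules.2 ⟨X, hX, o, ho, rfl⟩))) (by simpa using hacc)

theorem accepts_of_forall₂_isCorner {G : CFG ℕ} {t : List Sym} (ht : ∀ X ∈ t, X ∈ syms G)
    {vs : List (List ℕ)} (h : List.Forall₂ (IsCorner G) t vs) :
    Accepts (numRules G) vs.flatten
      ((t.map fun s => ((none, s) : Goal)).map Encodable.encode) := by
  induction h with
  | nil => exact .nil
  | cons h _ ih =>
    exact accepts_append (h.accepts (ht _ List.mem_cons_self))
      (ih fun X hX => ht X (List.mem_cons_of_mem _ hX))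

theorem IsCorner.of_rule {G : CFG ℕ} (hG : EpsFree G) {r : ℕ × List Sym} (hr : r ∈ G.2)
    {vs : List (List ℕ)} (h : List.Forall₂ (IsCorner G) r.2 vs) :
    IsCorner G (Sum.inr r.1) vs.flatten := by
  have hsub : ∀ Y ∈ r.2, Y ∈ syms G := fun Y hY => mem_syms_of_rule hr hY
  have hne := hG r hr
  generalize hρ : r.2 = ρ at h hsub hne
  cases h with
  | nil => exact absurd rfl hne
  | @cons X v₁ _ _ hX h =>
    obtain ⟨a, v₁, rfl, hX⟩ := hX
    cases h with
    | nil =>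
      refine ⟨a, v₁, by simp, fun D hD o ho w hw => hX D hD o ?_ w hw⟩
      rcases mem_conts.1 ho with ⟨h, rfl⟩ | ⟨Y, hY, h, rfl⟩
      · exact mem_conts.2 (.inl ⟨reach_of_rule hr hρ h, rfl⟩)
      · exact mem_conts.2 (.inr ⟨Y, hY, reach_of_rule hr hρ h, rfl⟩)
    | @cons s v₂ t vs hs h =>
      obtain ⟨b, v₂, rfl, hs⟩ := hs
      refine ⟨a, v₁ ++ b :: (v₂ ++ vs.flatten), by simp, fun D hD o ho w hw => ?_⟩
      obtain ⟨o₁, ho₁, hacc₁⟩ := hs s (hsub s (by simp)) [] (nil_mem_conts G s) [] .nil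
      have hacc := accepts_append hacc₁ (accepts_append
        (accepts_of_forall₂_isCorner (fun Y hY => hsub Y (by simp [hY])) h) hw)
      simp only [← List.map_append] at hacc
      have hstep := accepts_of_mem_rules (List.mem_append.2 (.inr (mem_stepRules.2
        ⟨r, hr, X, s, t, hρ, D, hD, o₁, ho₁, o, ho, rfl⟩))) hacc
      simpa using hX D hD [(some X, D)]
        (mem_conts.2 (.inr ⟨X, hsub X (by simp), .inl rfl, rfl⟩)) _ hstep

theorem exists_forall₂_isCorner {G : CFG ℕ} (hG : EpsFree G) {γ : List Sym} {w : List ℕ}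
    (h : Yields G γ w) : ∃ vs, w = vs.flatten ∧ List.Forall₂ (IsCorner G) γ vs := by
  induction h with
  | nil => exact ⟨[], rfl, .nil⟩
  | @term a _ _ _ ih =>
    obtain ⟨vs, rfl, hvs⟩ := ih
    exact ⟨[a] :: vs, rfl, .cons ⟨a, [], rfl, fun D _ o ho w hw => ⟨o, ho, hw⟩⟩ hvs⟩
  | rule hr _ _ ih₁ ih₂ =>
    obtain ⟨us, rfl, hus⟩ := ih₁
    obtain ⟨vs, rfl, hvs⟩ := ih₂
    exact ⟨us.flatten :: vs, rfl, .cons (.of_rule hG hr hus) hvs⟩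

/-- The number of the initial stack symbol. -/
def startGoal (G : CFG ℕ) : ℕ := Encodable.encode ((none, Sum.inr G.1) : Goal)

theorem mem_lang_iff_accepts {G : CFG ℕ} (hG : EpsFree G) {w : List ℕ} :
    w ∈ Lang G ↔ Accepts (numRules G) w [startGoal G] := by
  rw [mem_lang_iff_yields]
  constructor
  · intro h
    obtain ⟨vs, rfl, hvs⟩ := exists_forall₂_isCorner hG h
    have := accepts_of_forall₂_isCorner (by simp [start_mem_syms]) hvs
    simpa [startGoal] using this
  · intro h
    obtain ⟨u, _, rfl, hu, rfl⟩ := expectsAll_of_accepts (γ := [(none, Sum.inr G.1)]) h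
    simpa [Expects] using hu

/-- The type assigned to the letter `a`. -/
def letter (G : CFG ℕ) (a : ℕ) : Tp := letterTp (maxGoal G) (maxPush G) (numRules G a)

/-- The target type. -/
def target (G : CFG ℕ) : Tp := targetTp (maxGoal G) (maxPush G) (startGoal G)

theorem mem_lang_iff_derL {G : CFG ℕ} (hG : EpsFree G) {w : List ℕ} (hw : w ≠ []) :
    w ∈ Lang G ↔ DerL (w.map (letter G)) (target G) :=
  (mem_lang_iff_accepts hG).trans (accepts_iff_derL (fun _ _ hr => numRules_bounds hr)
    (encode_le_maxGoal (none_mem_goals (start_mem_syms G))) hw)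

end LeftCorner

/-! ### Effectiveness of the construction -/

section PrimrecTypes

variable {α β : Type} [Primcodable α] [Primcodable β]

/-- The code of the type `f a` depends primitive recursively on `a`. -/
def PrimrecTp (f : α → Tp) : Prop := Primrec fun a => encodeTp (f a)

/-- The code of the type `F a X` is computed primitive recursively from `a` and the code
of `X`. -/
def PrimrecOp (F : α → Tp → Tp) : Prop :=
  ∃ c : α → ℕ → ℕ, Primrec₂ c ∧ ∀ a X, encodeTp (F a X) = c a (encodeTp X)

namespace PrimrecOp

theorem id : PrimrecOp fun (_ : α) X => X := ⟨fun _ n => n, Primrec₂.right, fun _ _ => rfl⟩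

theorem of_primrecTp {f : α → Tp} (hf : PrimrecTp f) : PrimrecOp fun a _ => f a := by
  unfold PrimrecTp at hf
  exact ⟨fun a _ => encodeTp (f a), (hf.comp Primrec.fst).to₂, fun _ _ => rfl⟩

theorem const (A : Tp) : PrimrecOp fun (_ : α) _ => A := of_primrecTp (Primrec.const _)

theorem comp_op {F F' : α → Tp → Tp} (hF : PrimrecOp F) (hF' : PrimrecOp F') :
    PrimrecOp fun a X => F a (F' a X) := by
  obtain ⟨c, hc, h⟩ := hF
  obtain ⟨c', hc', h'⟩ := hF'
  exact ⟨fun a n => c a (c' a n), hc.comp₂ Primrec₂.left hc', fun a X => by rw [h, h']⟩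

theorem natPair {F₁ F₂ F : α → Tp → Tp} (k : ℕ)
    (h : ∀ a X, encodeTp (F a X) = Nat.pair k (Nat.pair (encodeTp (F₁ a X)) (encodeTp (F₂ a X))))
    (h₁ : PrimrecOp F₁) (h₂ : PrimrecOp F₂) : PrimrecOp F := by
  obtain ⟨c₁, hc₁, h₁⟩ := h₁
  obtain ⟨c₂, hc₂, h₂⟩ := h₂
  exact ⟨fun a n => Nat.pair k (Nat.pair (c₁ a n) (c₂ a n)),
    Primrec₂.natPair.comp₂ (Primrec₂.const k) (Primrec₂.natPair.comp₂ hc₁ hc₂),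
    fun a X => by rw [h, h₁, h₂]⟩

theorem mul {F₁ F₂ : α → Tp → Tp} (h₁ : PrimrecOp F₁) (h₂ : PrimrecOp F₂) :
    PrimrecOp fun a X => Tp.mul (F₁ a X) (F₂ a X) := natPair 1 (fun _ _ => rfl) h₁ h₂

theorem ldiv {F₁ F₂ : α → Tp → Tp} (h₁ : PrimrecOp F₁) (h₂ : PrimrecOp F₂) :
    PrimrecOp fun a X => Tp.ldiv (F₁ a X) (F₂ a X) := natPair 2 (fun _ _ => rfl) h₁ h₂

theorem rdiv {F₁ F₂ : α → Tp → Tp} (h₁ : PrimrecOp F₁) (h₂ : PrimrecOp F₂) :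
    PrimrecOp fun a X => Tp.rdiv (F₁ a X) (F₂ a X) := natPair 3 (fun _ _ => rfl) h₁ h₂

theorem iterate {F : α → Tp → Tp} (hF : PrimrecOp F) {n : α → ℕ} (hn : Primrec n) :
    PrimrecOp fun a X => (F a)^[n a] X := by
  obtain ⟨c, hc, h⟩ := hF
  refine ⟨fun a k => (c a)^[n a] k, Primrec.nat_iterate (hn.comp Primrec.fst) Primrec.snd
    (hc.comp (Primrec.fst.comp Primrec.fst) Primrec.snd).to₂, fun a X => ?_⟩
  exact Function.Semiconj.iterate_right (f := encodeTp) (h a) (n a) X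

theorem foldl {F : α × β → Tp → Tp} (hF : PrimrecOp F) {l : α → List β} (hl : Primrec l) :
    PrimrecOp fun a X => (l a).foldl (fun X b => F (a, b) X) X := by
  obtain ⟨c, hc, h⟩ := hF
  refine ⟨fun a k => (l a).foldl (fun k b => c (a, b) k) k,
    Primrec.list_foldl (hl.comp Primrec.fst) Primrec.snd
      (hc.comp (Primrec.pair (Primrec.fst.comp Primrec.fst) (Primrec.snd.comp Primrec.snd))
        (Primrec.fst.comp Primrec.snd)).to₂, fun a X => ?_⟩
  beta_reduce
  induction l a generalizing X with
  | nil => rfl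
  | cons b l ih => simp only [List.foldl_cons, ih, h]

theorem foldr {F : α × β → Tp → Tp} (hF : PrimrecOp F) {l : α → List β} (hl : Primrec l) :
    PrimrecOp fun a X => (l a).foldr (fun b X => F (a, b) X) X := by
  obtain ⟨c, hc, h⟩ := hF
  refine ⟨fun a k => (l a).foldr (fun b k => c (a, b) k) k,
    Primrec.list_foldr (hl.comp Primrec.fst) Primrec.snd
      (hc.comp (Primrec.pair (Primrec.fst.comp Primrec.fst) (Primrec.fst.comp Primrec.snd))
        (Primrec.snd.comp Primrec.snd)).to₂, fun a X => ?_⟩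
  beta_reduce
  induction l a with
  | nil => rfl
  | cons b l ih => simp only [List.foldr_cons, ← ih, h]

theorem apply {F : α → Tp → Tp} (hF : PrimrecOp F) {f : α → Tp} (hf : PrimrecTp f) :
    PrimrecTp fun a => F a (f a) := by
  obtain ⟨c, hc, h⟩ := hF
  unfold PrimrecTp at hf
  exact (hc.comp Primrec.id hf).of_eq fun a => (h a (f a)).symm

end PrimrecOp

theorem PrimrecTp.comp {f : β → Tp} (hf : PrimrecTp f) {g : α → β} (hg : Primrec g) :
    PrimrecTp fun a => f (g a) := by
  unfold PrimrecTp at hf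
  exact hf.comp hg

end PrimrecTypes

namespace StackTypes

variable {α : Type} [Primcodable α]

theorem primrecOp_iterates {i j : α → ℕ} (hi : Primrec i) (hj : Primrec j) :
    PrimrecOp fun a X => (Tp.mul popK)^[i a] ((Tp.mul popL)^[j a] X) :=
  .comp_op (.iterate (.mul (.const _) .id) hi) (.iterate (.mul (.const _) .id) hj)

theorem primrecOp_block {m g : α → ℕ} (hm : Primrec m) (hg : Primrec g) :
    PrimrecOp fun a => block (m a) (g a) :=
  primrecOp_iterates (Primrec.succ.comp hg) (Primrec.succ.comp (Primrec.nat_sub.comp hm hg))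

theorem primrecOp_stackTp {m : α → ℕ} {γ : α → List ℕ} (hm : Primrec m) (hγ : Primrec γ) :
    PrimrecOp fun a => stackTp (m a) (γ a) :=
  .foldl (primrecOp_block (hm.comp Primrec.fst) Primrec.snd) hγ

theorem primrecTp_bottom {n : α → ℕ} (hn : Primrec n) : PrimrecTp fun a => bottom (n a) := by
  have hop : PrimrecOp fun (_ : α) X => Tp.mul (Tp.mul X (Tp.ldiv (Tp.pr 2) (Tp.pr 3)))
      (Tp.ldiv (Tp.pr 3) (Tp.pr 2)) := .mul (.mul .id (.const _)) (.const _)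
  refine ((hop.iterate hn).apply (f := fun _ => bottom 0) (Primrec.const _)).of_eq fun a => ?_
  congr 1
  beta_reduce
  induction n a with
  | zero => rfl
  | succ n ih => rw [Function.iterate_succ_apply', ih]; rfl

theorem primrecOp_accept {F : α → Tp → Tp} (hF : PrimrecOp F) :
    PrimrecOp fun a X => accept (F a X) := .rdiv (.const _) (.mul hF (.const _))

theorem primrecTp_ruleTp {m N : α → ℕ} {r : α → ℕ × List ℕ} (hm : Primrec m) (hN : Primrec N)
    (hr : Primrec r) : PrimrecTp fun a => ruleTp (m a) (N a) (r a) :=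
  PrimrecOp.apply (.mul (primrecOp_accept (primrecOp_stackTp hm (Primrec.snd.comp hr)))
    (primrecOp_block hm (Primrec.fst.comp hr))) (primrecTp_bottom hN)

theorem primrecTp_lowerTp {m N : α → ℕ} (hm : Primrec m) (hN : Primrec N) :
    PrimrecTp fun a => lowerTp (m a) (N a) :=
  PrimrecOp.apply (.mul (.const _)
    (primrecOp_iterates (Primrec.succ.comp hm) (Primrec.succ.comp hm))) (primrecTp_bottom hN)

theorem primrecOp_join {D Q : α → Tp} (hD : PrimrecTp D) (hQ : PrimrecTp Q) :
    PrimrecOp fun a P => join (D a) P (Q a) := by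
  have hC : PrimrecOp fun a (_ : Tp) => Tp.ldiv (D a) (Tp.pr 4) :=
    .ldiv (.of_primrecTp hD) (.const _)
  exact .rdiv (.const _) (.mul (.rdiv (.ldiv .id (.const _)) hC)
    (.mul hC (.ldiv hC (.ldiv (.of_primrecTp hQ) (.const _)))))

theorem primrecTp_letterTp {m N : α → ℕ} {l : α → List (ℕ × List ℕ)} (hm : Primrec m)
    (hN : Primrec N) (hl : Primrec l) : PrimrecTp fun a => letterTp (m a) (N a) (l a) := by
  have hjoin : PrimrecOp fun (p : α × ℕ × List ℕ) U =>
      join (lowerTp (m p.1) (N p.1)) U (ruleTp (m p.1) (N p.1) p.2) :=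
    primrecOp_join ((primrecTp_lowerTp hm hN).comp Primrec.fst)
      (primrecTp_ruleTp (hm.comp Primrec.fst) (hN.comp Primrec.fst) Primrec.snd)
  exact (primrecOp_accept (hjoin.foldr hl)).apply (primrecTp_lowerTp hm hN)

theorem primrecTp_targetTp {m N g : α → ℕ} (hm : Primrec m) (hN : Primrec N) (hg : Primrec g) :
    PrimrecTp fun a => targetTp (m a) (N a) (g a) :=
  PrimrecOp.apply (.rdiv (.const _) (.mul (primrecOp_accept .id)
    (.mul (primrecOp_stackTp hm (Primrec.list_cons.comp hg (Primrec.const []))) (.const _))))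
    (primrecTp_bottom hN)

end StackTypes

namespace LeftCorner

open Primrec

theorem primrec_syms : Primrec syms :=
  list_cons.comp (sumInr.comp fst) (list_flatMap snd (snd.comp snd).to₂)

theorem primrec_unitEdges : Primrec unitEdges := by
  have hr : Primrec fun r : ℕ × List Sym =>
      if r.2.length = 1 then r.2.map fun X => (X, (Sum.inr r.1 : Sym)) else [] :=
    Primrec.ite (Primrec.eq.comp (list_length.comp snd) (.const 1))
      (list_map snd (Primrec.pair snd (sumInr.comp (fst.comp fst))).to₂) (.const _)
  exact list_flatMap snd (hr.comp snd).to₂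

theorem primrec_addEdge : Primrec₂ addEdge := by
  have hin : PrimrecRel fun (q e : Sym × Sym) => q.2 = e.1 :=
    Primrec.eq.comp (snd.comp fst) (fst.comp snd)
  have hout : PrimrecRel fun (q e : Sym × Sym) => q.1 = e.2 :=
    Primrec.eq.comp (fst.comp fst) (snd.comp snd)
  have hins : Primrec₂ fun (P : List (Sym × Sym)) (e : Sym × Sym) =>
      e.1 :: (P.filter fun q => q.2 = e.1).map Prod.fst :=
    list_cons.comp (fst.comp snd) (list_map hin.listFilter (fst.comp snd).to₂)
  have houts : Primrec₂ fun (P : List (Sym × Sym)) (e : Sym × Sym) =>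
      e.2 :: (P.filter fun q => q.1 = e.2).map Prod.snd :=
    list_cons.comp (snd.comp snd) (list_map hout.listFilter (snd.comp snd).to₂)
  exact list_append.comp fst (list_flatMap hins
    (list_map (houts.comp (fst.comp fst) (snd.comp fst)) (Primrec.pair (snd.comp fst) snd).to₂).to₂)

theorem primrec_unitPairs : Primrec unitPairs :=
  list_foldl primrec_unitEdges (.const []) (primrec_addEdge.comp (fst.comp snd) (snd.comp snd)).to₂

theorem primrecPred_reach {α : Type} [Primcodable α] {G : α → CFG ℕ} {X Y : α → Sym}
    (hG : Primrec G) (hX : Primrec X) (hY : Primrec Y) :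
    PrimrecPred fun a => Reach (G a) (X a) (Y a) :=
  (Primrec.eq.comp hX hY).or
    (Primrec.eq.exists_mem_list.comp (primrec_unitPairs.comp hG) (Primrec.pair hX hY))

theorem primrec_conts {α : Type} [Primcodable α] {G : α → CFG ℕ} {X D : α → Sym}
    (hG : Primrec G) (hX : Primrec X) (hD : Primrec D) :
    Primrec fun a => conts (G a) (X a) (D a) := by
  have hR : PrimrecRel fun (Y : Sym) (p : CFG ℕ × Sym) => Reach p.1 p.2 Y :=
    primrecPred_reach (fst.comp snd) (snd.comp snd) fst
  refine list_append.comp (Primrec.ite (primrecPred_reach hG hX hD) (.const _) (.const _)) ?_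
  exact list_map (hR.listFilter.comp (primrec_syms.comp hG) (Primrec.pair hG hX))
    (list_cons.comp (Primrec.pair (option_some.comp snd) (hD.comp fst)) (.const [])).to₂

theorem primrec_startRules : Primrec₂ startRules :=
  list_flatMap (primrec_syms.comp fst) (list_map
    (primrec_conts (fst.comp fst) (sumInl.comp (snd.comp fst)) snd)
    (Primrec.pair (Primrec.pair (.const none) (snd.comp fst)) snd).to₂).to₂

theorem primrec_stepRule {α : Type} [Primcodable α] {G : α → CFG ℕ} {a : α → ℕ}
    {r : α → ℕ × List Sym} {X s D : α → Sym} (hG : Primrec G) (ha : Primrec a) (hr : Primrec r)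
    (hX : Primrec X) (hs : Primrec s) (hD : Primrec D) :
    Primrec fun p => stepRule (G p) (a p) (r p) (X p) (s p) (D p) := by
  have hrest : Primrec fun p => (r p).2.tail.tail.map (fun t => ((none, t) : Goal)) :=
    list_map (list_tail.comp (list_tail.comp (snd.comp hr)))
      (Primrec.pair (.const none) snd).to₂
  have hrule : Primrec fun q : (α × List Goal) × List Goal => (((some (X q.1.1), D q.1.1),
      q.1.2 ++ ((r q.1.1).2.tail.tail.map (fun t => ((none, t) : Goal)) ++ q.2)) :
        Goal × List Goal) :=
    Primrec.pair (Primrec.pair (option_some.comp (hX.comp (fst.comp fst)))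
      (hD.comp (fst.comp fst))) (list_append.comp (snd.comp fst)
        (list_append.comp (hrest.comp (fst.comp fst)) snd))
  have hrules : Primrec fun q : α × List Goal => (conts (G q.1) (Sum.inr (r q.1).1) (D q.1)).map
      fun o => (((some (X q.1), D q.1),
        q.2 ++ ((r q.1).2.tail.tail.map (fun t => ((none, t) : Goal)) ++ o)) : Goal × List Goal) :=
    list_map ((primrec_conts hG (sumInr.comp (fst.comp hr)) hD).comp fst) hrule.to₂
  exact list_flatMap (primrec_conts hG (sumInl.comp ha) hs) hrules.to₂

theorem primrec_stepRules : Primrec₂ stepRules := by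
  have hs : Primrec fun p : (((CFG ℕ × ℕ) × (ℕ × List Sym)) × Sym) × Sym =>
      (syms p.1.1.1.1).flatMap fun D => stepRule p.1.1.1.1 p.1.1.1.2 p.1.1.2 p.1.2 p.2 D :=
    list_flatMap (primrec_syms.comp (fst.comp (fst.comp (fst.comp fst))))
      (primrec_stepRule (fst.comp (fst.comp (fst.comp (fst.comp fst))))
        (snd.comp (fst.comp (fst.comp (fst.comp fst)))) (snd.comp (fst.comp (fst.comp fst)))
        (snd.comp (fst.comp fst)) (snd.comp fst) snd).to₂
  have hX : Primrec fun p : ((CFG ℕ × ℕ) × (ℕ × List Sym)) × Sym =>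
      (p.1.2.2.tail.take 1).flatMap fun s => (syms p.1.1.1).flatMap fun D =>
        stepRule p.1.1.1 p.1.1.2 p.1.2 p.2 s D :=
    list_flatMap (list_take.comp (.const 1) (list_tail.comp (snd.comp (snd.comp fst)))) hs.to₂
  have hr : Primrec fun p : (CFG ℕ × ℕ) × (ℕ × List Sym) =>
      (p.2.2.take 1).flatMap fun X => (p.2.2.tail.take 1).flatMap fun s =>
        (syms p.1.1).flatMap fun D => stepRule p.1.1 p.1.2 p.2 X s D :=
    list_flatMap (list_take.comp (.const 1) (snd.comp snd)) hX.to₂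
  exact list_flatMap (snd.comp fst) hr.to₂

theorem primrec_numRules : Primrec₂ numRules :=
  list_map (list_append.comp primrec_startRules primrec_stepRules)
    (Primrec.pair (Primrec.encode.comp (fst.comp snd))
      (list_map (snd.comp snd) (Primrec.encode.comp snd).to₂)).to₂

theorem primrec_goals : Primrec goals :=
  list_append.comp (list_map primrec_syms (Primrec.pair (.const none) snd).to₂)
    (list_flatMap primrec_syms (list_map (primrec_syms.comp fst)
      (Primrec.pair (option_some.comp (snd.comp fst)) snd).to₂).to₂)

theorem primrec_maxGoal : Primrec maxGoal :=
  list_foldr primrec_goals (.const 0)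
    (nat_add.comp (Primrec.encode.comp (fst.comp snd)) (snd.comp snd)).to₂

theorem primrec_maxPush : Primrec maxPush :=
  nat_add.comp (list_length.comp primrec_syms) (.const 2)

theorem primrec_startGoal : Primrec startGoal :=
  Primrec.encode.comp (Primrec.pair (.const none) (sumInr.comp fst))

theorem computable_letter : Computable₂ fun G a => encodeTp (letter G a) :=
  Primrec.to_comp (StackTypes.primrecTp_letterTp (primrec_maxGoal.comp fst)
    (primrec_maxPush.comp fst) primrec_numRules)

theorem computable_target : Computable fun G => encodeTp (target G) :=
  Primrec.to_comp (StackTypes.primrecTp_targetTp primrec_maxGoal primrec_maxPush primrec_startGoal)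

end LeftCorner

/-! ### Renaming the letters of a grammar -/

section Rename

variable {σ τ : Type}

/-- The symbol obtained by renaming letters. -/
def renameSym (φ : σ → τ) : σ ⊕ ℕ → τ ⊕ ℕ := Sum.map φ id

/-- The grammar obtained by renaming letters. -/
def CFG.rename (φ : σ → τ) (G : CFG σ) : CFG τ :=
  (G.1, G.2.map fun r => (r.1, r.2.map (renameSym φ)))

theorem EpsFree.rename {G : CFG σ} (hG : EpsFree G) (φ : σ → τ) : EpsFree (G.rename φ) := by
  intro r hr
  obtain ⟨s, hs, rfl⟩ := List.mem_map.1 hr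
  simpa using hG s hs

theorem Yields.rename {G : CFG σ} {γ : List (σ ⊕ ℕ)} {w : List σ} (h : Yields G γ w)
    (φ : σ → τ) : Yields (G.rename φ) (γ.map (renameSym φ)) (w.map φ) := by
  induction h with
  | nil => exact .nil
  | term _ ih => exact ih.term
  | rule hr _ _ ih₁ ih₂ =>
    rw [List.map_append]
    exact .rule (List.mem_map_of_mem hr) ih₁ ih₂

theorem Yields.of_rename {G : CFG σ} {φ : σ → τ}
    (hφ : ∀ r ∈ G.2, ∀ a, Sum.inl a ∈ r.2 → ∀ b, φ a = φ b → a = b) {δ : List (τ ⊕ ℕ)}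
    {v : List τ} (h : Yields (G.rename φ) δ v) {γ : List (σ ⊕ ℕ)} (hδ : γ.map (renameSym φ) = δ)
    (hγ : ∀ a, Sum.inl a ∈ γ → ∀ b, φ a = φ b → a = b) {w : List σ} (hw : w.map φ = v) :
    Yields G γ w := by
  induction h generalizing γ w with
  | nil =>
    obtain rfl := List.map_eq_nil_iff.1 hδ
    obtain rfl := List.map_eq_nil_iff.1 hw
    exact .nil
  | term _ ih =>
    obtain ⟨s, γ, rfl, hs, hδ'⟩ := List.map_eq_cons_iff.1 hδ
    obtain ⟨b, w, rfl, hb, hw'⟩ := List.map_eq_cons_iff.1 hw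
    rcases s with a | n
    · obtain rfl := hγ a List.mem_cons_self b ((Sum.inl.inj hs).trans hb.symm)
      exact (ih hδ' (fun c hc => hγ c (List.mem_cons_of_mem _ hc)) hw').term
    · cases hs
  | rule hr _ _ ih₁ ih₂ =>
    obtain ⟨s, γ, rfl, hs, hδ'⟩ := List.map_eq_cons_iff.1 hδ
    obtain ⟨u, w, rfl, hu, hw'⟩ := List.map_eq_append_iff.1 hw
    obtain ⟨r, hr', rfl⟩ := List.mem_map.1 hr
    rcases s with a | n
    · cases hs
    · obtain rfl : n = r.1 := Sum.inr.inj hs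
      exact .rule hr' (ih₁ rfl (hφ r hr') hu)
        (ih₂ hδ' (fun c hc => hγ c (List.mem_cons_of_mem _ hc)) hw')

theorem map_mem_lang_rename_iff {G : CFG σ} {φ : σ → τ}
    (hφ : ∀ r ∈ G.2, ∀ a, Sum.inl a ∈ r.2 → ∀ b, φ a = φ b → a = b) {w : List σ} :
    w.map φ ∈ Lang (G.rename φ) ↔ w ∈ Lang G := by
  rw [mem_lang_iff_yields, mem_lang_iff_yields]
  exact ⟨fun h => h.of_rename hφ rfl (by simp) rfl, fun h => h.rename φ⟩

open Classical in
/-- The letters of a grammar can be numbered such that each one is distinguished from all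
other letters. -/
theorem exists_letter_numbering (G : CFG σ) :
    ∃ φ : σ → ℕ, ∀ r ∈ G.2, ∀ a, Sum.inl a ∈ r.2 → ∀ b, φ a = φ b → a = b := by
  refine ⟨fun a => (G.2.flatMap fun r => r.2.filterMap Sum.getLeft?).idxOf a,
    fun r hr a ha b h => (List.idxOf_inj ?_).1 h⟩
  exact List.mem_flatMap.2 ⟨r, hr, List.mem_filterMap.2 ⟨_, ha, rfl⟩⟩

end Rename

/-- Safiullin's theorem: every ε-free context-free language is generated by a
Lambek categorial grammar with unique type assignment — there are types `A a`
for each letter `a` and a target type `H` such that a non-empty word `w`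
belongs to the language iff the sequent `w.map A → H` is derivable in L.
Moreover (second conjunct), for grammars over a countable alphabet such a
categorial grammar can be effectively (computably) constructed from the
context-free grammar. -/
theorem safiullin_unique_type_assignment :
    (∀ (σ : Type) (G : CFG σ), EpsFree G →
      ∃ (A : σ → Tp) (H : Tp), ∀ w : List σ, w ≠ [] →
        (w ∈ Lang G ↔ DerL (w.map A) H)) ∧
    (∃ (F : CFG ℕ → ℕ → ℕ) (Ft : CFG ℕ → ℕ), Computable₂ F ∧ Computable Ft ∧
      ∀ G : CFG ℕ, EpsFree G →
        ∃ (A : ℕ → Tp) (H : Tp),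
          (∀ a : ℕ, F G a = encodeTp (A a)) ∧ Ft G = encodeTp H ∧
          ∀ w : List ℕ, w ≠ [] → (w ∈ Lang G ↔ DerL (w.map A) H)) := by
  refine ⟨fun σ G hG => ?_, fun G a => encodeTp (LeftCorner.letter G a),
    fun G => encodeTp (LeftCorner.target G), LeftCorner.computable_letter,
    LeftCorner.computable_target, fun G hG => ⟨LeftCorner.letter G, LeftCorner.target G,
      fun _ => rfl, rfl, fun _ hw => LeftCorner.mem_lang_iff_derL hG hw⟩⟩
  obtain ⟨φ, hφ⟩ := exists_letter_numbering G
  refine ⟨fun a => LeftCorner.letter (G.rename φ) (φ a), LeftCorner.target (G.rename φ),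
    fun w hw => ?_⟩
  rw [← map_mem_lang_rename_iff hφ,
    LeftCorner.mem_lang_iff_derL (hG.rename φ) (by simpa using hw), List.map_map]
  rfl
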